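/- arXiv:1805.02213 — 2 statements merged into one kernel-verified Lean document; each statement's English description precedes it below -/
import Mathlib

section
/- Fix α ∈ (0,1). Define a sequence of partitions of [0,1] into finitely many closed intervals with pairwise disjoint interiors as follows: π_0 = {[0,1]}, and for m ≥ 1 the partition π_m is obtained from π_{m−1} by replacing every interval [a,b] of maximal length in π_{m−1} by the two intervals [a, a+α(b−a)] and [a+α(b−a), b]. Let k(m) be the number of intervals of π_m and let t_1^m, …, t_{k(m)}^m be their right endpoints. Then for every continuous function f : [0,1] → ℝ, lim_{m→∞} (1/k(m)) · Σ_{i=1}^{k(m)} f(t_i^m) = ∫_0^1 f(t) dt. -/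
/-!
Let `N(x)` be the number of pieces produced from an interval of length `x` by cutting, in
proportion `α : (1 - α)`, as long as there are pieces of length at least `1`. The intervals of
`π_(n+1)` are exactly the pieces obtained from those of `π_m`, `m ≤ n`, by cutting all lengths at
least `t_n`, the mesh of `π_n`; so an interval of `π_m` of length `L` contains
`N(L / t_n)` of the `N(1 / t_n)` intervals of `π_(n+1)`. It thus suffices that `t_n → 0` and
`N(L x) / N(x) → L` as `x → ∞`: the average over `π_(n+1)` is then asymptotically a Riemann sum
over `π_m`, up to the oscillation of `f` on the intervals of `π_m`.

Every piece is at least `min(α, 1 - α)` times as long as the cutting threshold. As the number of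
intervals grows at every step, this forces `t_n → 0`; it also shows that `Z(x) = N(x) / x` is
bounded for `x ≥ 1`. By the recursion `N(x) = N(α x) + N((1 - α) x)`, the value `Z(x)` is the
average of `Z(α x)` and `Z((1 - α) x)` with weights `α` and `1 - α`, and the same holds for
`D(x) = Z(x) - Z(α x)`. If `x` is large and `D(x)` is close to `η = limsup D`, then so are
`D(α x), D(α² x), …`. These differences telescope to a difference of two values of `Z`, which is
bounded, so `η ≤ 0`; with the same argument for `-Z` we get `D → 0`. As `N(x) ≥ x`, this says
`N(α x) / N(x) → α`, then `N((1 - α) x) / N(x) → 1 - α` by the recursion, and `N(L x) / N(x) → L`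
for every product `L` of factors `α` and `1 - α`.
-/

open Filter Topology

/-- Splitting an interval `[a, b]` (represented by the pair of its endpoints) in
proportion `α : (1 − α)` into `[a, a + α(b−a)]` and `[a + α(b−a), b]`. -/
noncomputable def kakSplit (α : ℝ) (p : ℝ × ℝ) : Finset (ℝ × ℝ) :=
  {(p.1, p.1 + α * (p.2 - p.1)), (p.1 + α * (p.2 - p.1), p.2)}

/-- The intervals of maximal length in a finite collection of intervals
(represented by the pairs of their endpoints). -/
noncomputable def kakMax (P : Finset (ℝ × ℝ)) : Finset (ℝ × ℝ) :=
  P.filter fun p => ∀ q ∈ P, q.2 - q.1 ≤ p.2 - p.1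

section Renewal

variable {X : Type*} {l U : Filter X} {a b : X → X} {α β η B : ℝ} {D Z : X → ℝ}

lemma tendsto_map_of_convexComb_of_eventually_lt (hα : 0 < α) (hβ : 0 < β) (hαβ : α + β = 1)
    (ha : Tendsto a l l) (hb : Tendsto b l l)
    (hD : ∀ᶠ x in l, D x = α * D (a x) + β * D (b x)) (hη : ∀ c > η, ∀ᶠ x in l, D x < c)
    (hUl : U ≤ l) (hU : Tendsto D U (𝓝 η)) : Tendsto D (map a U) (𝓝 η) := by
  rw [tendsto_map'_iff]
  refine tendsto_order.2 ⟨fun c hc => ?_, fun c hc => hUl (ha.eventually (hη c hc))⟩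
  set δ := α * (η - c) / 2 with hδ
  have hδ0 : 0 < δ := by have := sub_pos.2 hc; positivity
  filter_upwards [hUl hD, hUl (hb.eventually (hη (η + δ) (by linarith))),
    hU.eventually_const_lt (sub_lt_self η hδ0)] with x hDx hbx hx
  have hβδ : β * δ < δ := mul_lt_of_lt_one_left hδ0 (by linarith)
  refine lt_of_mul_lt_mul_left ?_ hα.le
  calc α * c = η - δ - β * η - δ := by linear_combination η * hαβ - 2 * hδ
    _ < D x - β * (η + δ) := by linarith
    _ < D x - β * D (b x) := by gcongr
    _ = α * D (a x) := by rw [hDx, add_sub_cancel_right]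

lemma eventually_eq_convexComb_sub_comp (ha : Tendsto a l l) (hab : Function.Commute a b)
    (hZ : ∀ᶠ x in l, Z x = α * Z (a x) + β * Z (b x)) :
    ∀ᶠ x in l, Z x - Z (a x) = α * (Z (a x) - Z (a (a x))) + β * (Z (b x) - Z (a (b x))) := by
  filter_upwards [hZ, ha.eventually hZ] with x hx hax
  rw [hab x]
  linear_combination hx - hax

lemma nonpos_of_tendsto_sub_comp_iterate [NeBot U] (hB : ∀ k, ∀ᶠ x in map a^[k] U, |Z x| ≤ B)
    (hη : ∀ k, Tendsto (fun x => Z x - Z (a x)) (map a^[k] U) (𝓝 η)) : η ≤ 0 := by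
  have hle (k : ℕ) : k * η ≤ B + B := by
    have hsum : Tendsto (fun x => ∑ i ∈ Finset.range k, (Z (a^[i] x) - Z (a (a^[i] x)))) U
        (𝓝 (∑ _i ∈ Finset.range k, η)) :=
      tendsto_finsetSum _ fun i _ => tendsto_map'_iff.1 (hη i)
    rw [Finset.sum_const, Finset.card_range, nsmul_eq_mul] at hsum
    refine le_of_tendsto hsum ?_
    filter_upwards [hB 0, hB k] with x hx hkx
    simp only [← Function.iterate_succ_apply' a, Finset.sum_range_sub' fun i => Z (a^[i] x)]
    exact (le_abs_self _).trans ((abs_sub _ _).trans (add_le_add hx hkx))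
  by_contra! hpos
  obtain ⟨k, hk⟩ := exists_nat_gt ((B + B) / η)
  exact absurd (hle k) (not_le.2 ((div_lt_iff₀ hpos).1 hk))

lemma eventually_sub_comp_lt (hα : 0 < α) (hβ : 0 < β) (hαβ : α + β = 1)
    (ha : Tendsto a l l) (hb : Tendsto b l l) (hab : Function.Commute a b)
    (hB : ∀ᶠ x in l, |Z x| ≤ B) (hZ : ∀ᶠ x in l, Z x = α * Z (a x) + β * Z (b x))
    {ε : ℝ} (hε : 0 < ε) : ∀ᶠ x in l, Z x - Z (a x) < ε := by
  obtain rfl | _ := l.eq_or_neBot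
  · exact eventually_bot
  set D : X → ℝ := fun x => Z x - Z (a x)
  have hDB : ∀ᶠ x in l, |D x| ≤ B + B := by
    filter_upwards [hB, ha.eventually hB] with x hx hax
    exact (abs_sub _ _).trans (add_le_add hx hax)
  have hbdd : IsBoundedUnder (· ≤ ·) l D := ⟨B + B, hDB.mono fun _ h => (abs_le.1 h).2⟩
  have hcobdd : IsCoboundedUnder (· ≤ ·) l D :=
    IsBoundedUnder.isCoboundedUnder_le ⟨-(B + B), hDB.mono fun _ h => (abs_le.1 h).1⟩
  have hlt : ∀ c > limsup D l, ∀ᶠ x in l, D x < c := fun c hc =>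
    eventually_lt_of_limsup_lt hc hbdd
  suffices hη : limsup D l ≤ 0 from hlt ε (hη.trans_lt hε)
  obtain ⟨U, hUl, hU⟩ := mapClusterPt_iff_ultrafilter.1 (MapClusterPt.limsup hcobdd hbdd)
  have hak (k : ℕ) : map a^[k] U ≤ l := (ha.iterate k).mono_left hUl
  have hDk (k : ℕ) : Tendsto D (map a^[k] U) (𝓝 (limsup D l)) := by
    induction k with
    | zero => simpa using hU
    | succ k ih =>
      rw [Function.iterate_succ', ← map_map]
      exact tendsto_map_of_convexComb_of_eventually_lt hα hβ hαβ ha hb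
        (eventually_eq_convexComb_sub_comp ha hab hZ) hlt (hak k) ih
  exact nonpos_of_tendsto_sub_comp_iterate (fun k => hak k hB) hDk

theorem tendsto_sub_comp_of_convexComb (hα : 0 < α) (hβ : 0 < β) (hαβ : α + β = 1)
    (ha : Tendsto a l l) (hb : Tendsto b l l) (hab : Function.Commute a b)
    (hB : ∀ᶠ x in l, |Z x| ≤ B) (hZ : ∀ᶠ x in l, Z x = α * Z (a x) + β * Z (b x)) :
    Tendsto (fun x => Z x - Z (a x)) l (𝓝 0) := by
  refine tendsto_order.2 ⟨fun c hc => ?_, fun c hc =>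
    eventually_sub_comp_lt hα hβ hαβ ha hb hab hB hZ hc⟩
  have hneg : ∀ᶠ x in l, -Z x - -Z (a x) < -c :=
    eventually_sub_comp_lt hα hβ hαβ ha hb hab (Z := fun x => -Z x) (by simpa using hB)
      (hZ.mono fun x hx => by rw [hx]; ring) (neg_pos.2 hc)
  filter_upwards [hneg] with x hx
  linarith

end Renewal

/-- `P` partitions `(I.1, I.2]` into the nonempty half-open intervals `(p.1, p.2]` for `p ∈ P`.
Half-open intervals turn disjointness of interiors into disjointness and put the right endpoint of
`p` into `p` only. -/
structure IsIntervalPartition (I : ℝ × ℝ) (P : Finset (ℝ × ℝ)) : Prop where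
  lt : ∀ p ∈ P, p.1 < p.2
  pairwiseDisjoint : (P : Set (ℝ × ℝ)).PairwiseDisjoint fun p => Set.Ioc p.1 p.2
  biUnion_Ioc : ⋃ p ∈ P, Set.Ioc p.1 p.2 = Set.Ioc I.1 I.2

namespace IsIntervalPartition

variable {I p : ℝ × ℝ} {P : Finset (ℝ × ℝ)} {Q : ℝ × ℝ → Finset (ℝ × ℝ)}

lemma singleton (hI : I.1 < I.2) : IsIntervalPartition I {I} where
  lt := by simpa using hI
  pairwiseDisjoint := by simp
  biUnion_Ioc := by simp

lemma pair {c : ℝ} (h₁ : I.1 < c) (h₂ : c < I.2) :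
    IsIntervalPartition I {(I.1, c), (c, I.2)} where
  lt := by simp [h₁, h₂]
  pairwiseDisjoint := by
    have h : Disjoint (Set.Ioc I.1 c) (Set.Ioc c I.2) := Set.Ioc_disjoint_Ioc_of_le le_rfl
    rw [Finset.coe_pair]
    exact Set.pairwise_pair.2 fun _ => ⟨h, h.symm⟩
  biUnion_Ioc := by simp [Set.Ioc_union_Ioc_eq_Ioc h₁.le h₂.le]

lemma Ioc_subset (hP : IsIntervalPartition I P) (hp : p ∈ P) :
    Set.Ioc p.1 p.2 ⊆ Set.Ioc I.1 I.2 :=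
  hP.biUnion_Ioc ▸ Set.subset_biUnion_of_mem (u := fun p : ℝ × ℝ => Set.Ioc p.1 p.2) hp

lemma right_mem_Ioc (hP : IsIntervalPartition I P) (hp : p ∈ P) : p.2 ∈ Set.Ioc I.1 I.2 :=
  hP.Ioc_subset hp (Set.right_mem_Ioc.2 (hP.lt p hp))

lemma nonempty (hP : IsIntervalPartition I P) (hI : I.1 < I.2) : P.Nonempty := by
  refine Finset.nonempty_iff_ne_empty.2 fun hP0 => (Set.nonempty_Ioc.2 hI).ne_empty ?_
  simp [← hP.biUnion_Ioc, hP0]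

lemma pairwiseDisjoint_biUnion (hP : IsIntervalPartition I P)
    (hQ : ∀ p ∈ P, IsIntervalPartition p (Q p)) : (P : Set (ℝ × ℝ)).PairwiseDisjoint Q := by
  intro p hp p' hp' hne
  refine Finset.disjoint_left.2 fun q hq hq' => ?_
  exact (hP.pairwiseDisjoint hp hp' hne).notMem_of_mem_left
    ((hQ p hp).right_mem_Ioc hq) ((hQ p' hp').right_mem_Ioc hq')

lemma biUnion (hP : IsIntervalPartition I P) (hQ : ∀ p ∈ P, IsIntervalPartition p (Q p)) :
    IsIntervalPartition I (P.biUnion Q) where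
  lt q hq := by
    obtain ⟨p, hp, hqp⟩ := Finset.mem_biUnion.1 hq
    exact (hQ p hp).lt q hqp
  pairwiseDisjoint := by
    rw [Finset.coe_biUnion]
    refine Set.PairwiseDisjoint.biUnion_finset ?_ fun p hp => (hQ p hp).pairwiseDisjoint
    refine hP.pairwiseDisjoint.mono_on fun p hp => ?_
    rw [Finset.sup_set_eq_biUnion, (hQ p hp).biUnion_Ioc]
  biUnion_Ioc := by
    rw [Finset.set_biUnion_biUnion, ← hP.biUnion_Ioc]
    exact Set.iUnion₂_congr fun p hp => (hQ p hp).biUnion_Ioc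

lemma sum_biUnion {M : Type*} [AddCommMonoid M] (hP : IsIntervalPartition I P)
    (hQ : ∀ p ∈ P, IsIntervalPartition p (Q p)) (h : ℝ × ℝ → M) :
    ∑ q ∈ P.biUnion Q, h q = ∑ p ∈ P, ∑ q ∈ Q p, h q :=
  Finset.sum_biUnion (hP.pairwiseDisjoint_biUnion hQ)

lemma card_biUnion (hP : IsIntervalPartition I P) (hQ : ∀ p ∈ P, IsIntervalPartition p (Q p)) :
    (P.biUnion Q).card = ∑ p ∈ P, (Q p).card :=
  Finset.card_biUnion (hP.pairwiseDisjoint_biUnion hQ)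

lemma norm_sum_biUnion_sub_le {E : Type*} [SeminormedAddCommGroup E] {f : ℝ → E} {ε : ℝ}
    (hP : IsIntervalPartition I P) (hQ : ∀ p ∈ P, IsIntervalPartition p (Q p))
    (hε : ∀ p ∈ P, ∀ x ∈ Set.Ioc p.1 p.2, ‖f p.2 - f x‖ ≤ ε) :
    ‖∑ q ∈ P.biUnion Q, f q.2 - ∑ p ∈ P, (Q p).card • f p.2‖ ≤ (P.biUnion Q).card * ε := by
  rw [hP.sum_biUnion hQ, hP.card_biUnion hQ, Nat.cast_sum, Finset.sum_mul,
    ← Finset.sum_sub_distrib]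
  refine norm_sum_le_of_le P fun p hp => ?_
  rw [← Finset.sum_const, ← Finset.sum_sub_distrib, ← nsmul_eq_mul, ← Finset.sum_const]
  refine norm_sum_le_of_le _ fun q hq => ?_
  rw [norm_sub_rev]
  exact hε p hp q.2 ((hQ p hp).right_mem_Ioc hq)

section Integral

open MeasureTheory

variable {E : Type*} [NormedAddCommGroup E] [NormedSpace ℝ E] {f : ℝ → E}

lemma sum_setIntegral (hP : IsIntervalPartition I P) (hf : IntegrableOn f (Set.Ioc I.1 I.2)) :
    ∑ p ∈ P, ∫ x in Set.Ioc p.1 p.2, f x = ∫ x in Set.Ioc I.1 I.2, f x := by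
  rw [← hP.biUnion_Ioc, integral_biUnion_finset P (fun _ _ => measurableSet_Ioc)
    hP.pairwiseDisjoint fun p hp => hf.mono_set (hP.Ioc_subset hp)]

lemma sum_length (hP : IsIntervalPartition I P) (hI : I.1 ≤ I.2) :
    ∑ p ∈ P, (p.2 - p.1) = I.2 - I.1 := by
  have h := hP.sum_setIntegral (f := fun _ => (1 : ℝ)) (by simp)
  simp only [setIntegral_const, Real.volume_real_Ioc_of_le hI, smul_eq_mul, mul_one] at h
  rw [← h]
  exact Finset.sum_congr rfl fun p hp => (Real.volume_real_Ioc_of_le (hP.lt p hp).le).symm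

lemma norm_riemannSum_sub_integral_le [CompleteSpace E] (hP : IsIntervalPartition I P)
    (hI : I.1 ≤ I.2) (hf : IntegrableOn f (Set.Ioc I.1 I.2)) {ε : ℝ}
    (hε : ∀ p ∈ P, ∀ x ∈ Set.Ioc p.1 p.2, ‖f p.2 - f x‖ ≤ ε) :
    ‖∑ p ∈ P, (p.2 - p.1) • f p.2 - ∫ x in Set.Ioc I.1 I.2, f x‖ ≤ ε * (I.2 - I.1) := by
  rw [← hP.sum_setIntegral hf, ← Finset.sum_sub_distrib, ← hP.sum_length hI, Finset.mul_sum]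
  refine norm_sum_le_of_le P fun p hp => ?_
  have hvol : volume.real (Set.Ioc p.1 p.2) = p.2 - p.1 :=
    Real.volume_real_Ioc_of_le (hP.lt p hp).le
  have hint : (p.2 - p.1) • f p.2 - ∫ x in Set.Ioc p.1 p.2, f x =
      ∫ x in Set.Ioc p.1 p.2, (f p.2 - f x) := by
    rw [integral_sub (by simp) (hf.mono_set (hP.Ioc_subset hp)), setIntegral_const, hvol]
  rw [hint, ← hvol]
  exact norm_setIntegral_le_of_norm_le_const measure_Ioc_lt_top (hε p hp)

end Integral

end IsIntervalPartition

section Split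

variable {α : ℝ} {p q : ℝ × ℝ}

/-- The point cutting the interval `p` in proportion `α : (1 - α)`. -/
noncomputable def kakCut (α : ℝ) (p : ℝ × ℝ) : ℝ := p.1 + α * (p.2 - p.1)

lemma kakSplit_eq (α : ℝ) (p : ℝ × ℝ) : kakSplit α p = {(p.1, kakCut α p), (kakCut α p, p.2)} :=
  rfl

lemma kakCut_sub_left (α : ℝ) (p : ℝ × ℝ) : kakCut α p - p.1 = α * (p.2 - p.1) :=
  add_sub_cancel_left _ _

lemma right_sub_kakCut (α : ℝ) (p : ℝ × ℝ) : p.2 - kakCut α p = (1 - α) * (p.2 - p.1) := by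
  rw [kakCut]
  ring

lemma left_lt_kakCut (hα : 0 < α) (hp : p.1 < p.2) : p.1 < kakCut α p :=
  lt_add_of_pos_right _ (mul_pos hα (sub_pos.2 hp))

lemma kakCut_lt_right (hα : α < 1) (hp : p.1 < p.2) : kakCut α p < p.2 := by
  rw [← sub_pos, right_sub_kakCut]
  exact mul_pos (sub_pos.2 hα) (sub_pos.2 hp)

lemma isIntervalPartition_kakSplit (hα : α ∈ Set.Ioo (0 : ℝ) 1) (hp : p.1 < p.2) :
    IsIntervalPartition p (kakSplit α p) :=
  .pair (left_lt_kakCut hα.1 hp) (kakCut_lt_right hα.2 hp)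

lemma sum_kakSplit {M : Type*} [AddCommMonoid M] (hα : 0 < α) (hp : p.1 < p.2)
    (h : ℝ × ℝ → M) :
    ∑ q ∈ kakSplit α p, h q = h (p.1, kakCut α p) + h (kakCut α p, p.2) :=
  Finset.sum_pair fun heq => (left_lt_kakCut hα hp).ne (congrArg Prod.fst heq)

lemma length_lt_of_mem_kakSplit (hα : α ∈ Set.Ioo (0 : ℝ) 1) (hp : p.1 < p.2)
    (hq : q ∈ kakSplit α p) : q.2 - q.1 < p.2 - p.1 := by
  simp only [kakSplit_eq, Finset.mem_insert, Finset.mem_singleton] at hq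
  obtain rfl | rfl := hq
  · exact sub_lt_sub_right (kakCut_lt_right hα.2 hp) _
  · exact sub_lt_sub_left (left_lt_kakCut hα.1 hp) _

lemma min_mul_length_le_of_mem_kakSplit (hp : p.1 ≤ p.2) (hq : q ∈ kakSplit α p) :
    min α (1 - α) * (p.2 - p.1) ≤ q.2 - q.1 := by
  have hp0 : 0 ≤ p.2 - p.1 := sub_nonneg.2 hp
  simp only [kakSplit_eq, Finset.mem_insert, Finset.mem_singleton] at hq
  obtain rfl | rfl := hq
  · simpa only [kakCut_sub_left] using mul_le_mul_of_nonneg_right (min_le_left _ _) hp0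
  · simpa only [right_sub_kakCut] using mul_le_mul_of_nonneg_right (min_le_right _ _) hp0

end Split

section Pieces

variable {α t : ℝ} {p q : ℝ × ℝ}

lemma floor_div_lt_floor_div {δ x y : ℝ} (hδ : 0 < δ) (hy : 0 ≤ y) (hxy : y + δ ≤ x) :
    ⌊y / δ⌋₊ < ⌊x / δ⌋₊ := by
  rw [← Nat.add_one_le_iff, ← Nat.floor_add_one (by positivity)]
  refine Nat.floor_le_floor ?_
  rwa [div_add_one hδ.ne', div_le_div_iff_of_pos_right hδ]

/-- The intervals obtained from `p` by splitting recursively, in proportion `α : (1 - α)`, every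
interval of length at least `t`. Outside the range `α ∈ (0, 1)`, `0 < t`, where this procedure
terminates, the junk value is `{p}`. -/
noncomputable def kakPieces (α t : ℝ) (p : ℝ × ℝ) : Finset (ℝ × ℝ) :=
  if _h : α ∈ Set.Ioo (0 : ℝ) 1 ∧ 0 < t ∧ t ≤ p.2 - p.1 then
    kakPieces α t (p.1, kakCut α p) ∪ kakPieces α t (kakCut α p, p.2)
  else {p}
termination_by ⌊(p.2 - p.1) / (t * min α (1 - α))⌋₊
decreasing_by
  all_goals
    obtain ⟨⟨hα0, hα1⟩, ht, htp⟩ := _h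
    have := sub_pos.2 hα1
    have hlen : 0 < p.2 - p.1 := ht.trans_le htp
    refine floor_div_lt_floor_div (by positivity) ?_ ?_
  · rw [kakCut_sub_left]; positivity
  · have := mul_le_mul htp (min_le_right α (1 - α)) (by positivity) hlen.le
    rw [kakCut_sub_left]; linarith
  · rw [right_sub_kakCut]; positivity
  · have := mul_le_mul htp (min_le_left α (1 - α)) (by positivity) hlen.le
    rw [right_sub_kakCut]; linarith

lemma kakPieces_of_lt (h : p.2 - p.1 < t) : kakPieces α t p = {p} := by
  rw [kakPieces, dif_neg fun h' => h.not_ge h'.2.2]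

lemma kakPieces_of_le (hα : α ∈ Set.Ioo (0 : ℝ) 1) (ht : 0 < t) (h : t ≤ p.2 - p.1) :
    kakPieces α t p = (kakSplit α p).biUnion (kakPieces α t) := by
  rw [kakPieces, dif_pos ⟨hα, ht, h⟩, kakSplit_eq, Finset.biUnion_insert,
    Finset.singleton_biUnion]

@[elab_as_elim]
lemma kakPieces_induction {C : ℝ × ℝ → Prop} (hα : α ∈ Set.Ioo (0 : ℝ) 1) (ht : 0 < t)
    (short : ∀ p, p.2 - p.1 < t → C p)
    (split : ∀ p, t ≤ p.2 - p.1 → (∀ q ∈ kakSplit α p, C q) → C p) (p : ℝ × ℝ) : C p := by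
  induction p using kakPieces.induct α t with
  | case1 p h ihl ihr => exact split p h.2.2 (by simpa [kakSplit_eq] using ⟨ihl, ihr⟩)
  | case2 p h => exact short p (not_le.1 fun htp => h ⟨hα, ht, htp⟩)

lemma isIntervalPartition_kakPieces (hα : α ∈ Set.Ioo (0 : ℝ) 1) (ht : 0 < t) (hp : p.1 < p.2) :
    IsIntervalPartition p (kakPieces α t p) := by
  induction p using kakPieces_induction hα ht with
  | short p hpt =>
    rw [kakPieces_of_lt hpt]
    exact .singleton hp
  | split p hpt ih =>
    have hS := isIntervalPartition_kakSplit hα hp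
    rw [kakPieces_of_le hα ht hpt]
    exact hS.biUnion fun q hq => ih q hq (hS.lt q hq)

lemma length_lt_of_mem_kakPieces (hα : α ∈ Set.Ioo (0 : ℝ) 1) (ht : 0 < t)
    (hq : q ∈ kakPieces α t p) : q.2 - q.1 < t := by
  induction p using kakPieces_induction hα ht with
  | short p hpt =>
    rw [kakPieces_of_lt hpt, Finset.mem_singleton] at hq
    rwa [hq]
  | split p hpt ih =>
    rw [kakPieces_of_le hα ht hpt, Finset.mem_biUnion] at hq
    obtain ⟨r, hr, hqr⟩ := hq
    exact ih r hr hqr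

lemma le_length_of_mem_kakPieces (hα : α ∈ Set.Ioo (0 : ℝ) 1) (ht : 0 < t)
    (hpt : min α (1 - α) * t ≤ p.2 - p.1) (hq : q ∈ kakPieces α t p) :
    min α (1 - α) * t ≤ q.2 - q.1 := by
  induction p using kakPieces_induction hα ht with
  | short p hp =>
    rw [kakPieces_of_lt hp, Finset.mem_singleton] at hq
    rwa [hq]
  | split p hp ih =>
    rw [kakPieces_of_le hα ht hp, Finset.mem_biUnion] at hq
    obtain ⟨r, hr, hqr⟩ := hq
    have hmin : 0 ≤ min α (1 - α) := le_min hα.1.le (sub_nonneg.2 hα.2.le)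
    have hp' : p.1 ≤ p.2 := sub_nonneg.1 (ht.le.trans hp)
    exact ih r hr ((mul_le_mul_of_nonneg_left hp hmin).trans
      (min_mul_length_le_of_mem_kakSplit hp' hr)) hqr

lemma card_kakPieces_of_le (hα : α ∈ Set.Ioo (0 : ℝ) 1) (ht : 0 < t) (h : t ≤ p.2 - p.1) :
    (kakPieces α t p).card =
      (kakPieces α t (p.1, kakCut α p)).card + (kakPieces α t (kakCut α p, p.2)).card := by
  have hp : p.1 < p.2 := sub_pos.1 (ht.trans_le h)
  have hS := isIntervalPartition_kakSplit hα hp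
  rw [kakPieces_of_le hα ht h, hS.card_biUnion fun q hq =>
    isIntervalPartition_kakPieces hα ht (hS.lt q hq), sum_kakSplit hα.1 hp]

lemma card_kakPieces_congr {s : ℝ} (hα : α ∈ Set.Ioo (0 : ℝ) 1) (hs : 0 < s) (ht : 0 < t)
    (h : (p.2 - p.1) / s = (q.2 - q.1) / t) :
    (kakPieces α s p).card = (kakPieces α t q).card := by
  induction p using kakPieces_induction hα hs generalizing q with
  | short p hp =>
    have hq : q.2 - q.1 < t := by rwa [← div_lt_one ht, ← h, div_lt_one hs]
    simp only [kakPieces_of_lt hp, kakPieces_of_lt hq, Finset.card_singleton]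
  | split p hp ih =>
    have hq : t ≤ q.2 - q.1 := by rwa [← one_le_div ht, ← h, one_le_div hs]
    simp only [kakSplit_eq, Finset.mem_insert, Finset.mem_singleton, forall_eq_or_imp,
      forall_eq] at ih
    rw [card_kakPieces_of_le hα hs hp, card_kakPieces_of_le hα ht hq]
    congr 1
    · exact ih.1 (by simp only [kakCut_sub_left, mul_div_assoc, h])
    · exact ih.2 (by simp only [right_sub_kakCut, mul_div_assoc, h])

end Pieces

section Count

variable {α t x : ℝ} {p : ℝ × ℝ}

/-- The counting function of the splitting procedure: the number of pieces into which an interval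
of length `x` is split by cutting intervals of length at least `1`. -/
noncomputable def kakCount (α x : ℝ) : ℕ := (kakPieces α 1 (0, x)).card

lemma card_kakPieces (hα : α ∈ Set.Ioo (0 : ℝ) 1) (ht : 0 < t) :
    (kakPieces α t p).card = kakCount α ((p.2 - p.1) / t) :=
  card_kakPieces_congr hα ht one_pos (by simp)

lemma kakCount_of_one_le (hα : α ∈ Set.Ioo (0 : ℝ) 1) (hx : 1 ≤ x) :
    kakCount α x = kakCount α (α * x) + kakCount α ((1 - α) * x) := by
  have hl : kakCut α (0, x) - 0 = α * x := by simpa only [sub_zero] using kakCut_sub_left α (0, x)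
  have hr : x - kakCut α (0, x) = (1 - α) * x := by
    simpa only [sub_zero] using right_sub_kakCut α (0, x)
  rw [kakCount, card_kakPieces_of_le hα one_pos (by simpa using hx), card_kakPieces hα one_pos,
    card_kakPieces hα one_pos]
  simp only [hl, hr, div_one]

lemma le_kakCount (hα : α ∈ Set.Ioo (0 : ℝ) 1) (hx : 0 < x) : x ≤ kakCount α x := by
  have hP := isIntervalPartition_kakPieces hα one_pos (p := (0, x)) hx
  calc x = ∑ q ∈ kakPieces α 1 (0, x), (q.2 - q.1) := by rw [hP.sum_length hx.le, sub_zero]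
    _ ≤ ∑ _q ∈ kakPieces α 1 (0, x), 1 :=
        Finset.sum_le_sum fun q hq => (length_lt_of_mem_kakPieces hα one_pos hq).le
    _ = kakCount α x := by simp [kakCount]

lemma kakCount_pos (hα : α ∈ Set.Ioo (0 : ℝ) 1) (hx : 0 < x) : (0 : ℝ) < kakCount α x :=
  hx.trans_le (le_kakCount hα hx)

lemma min_mul_kakCount_le (hα : α ∈ Set.Ioo (0 : ℝ) 1) (hx : 1 ≤ x) :
    min α (1 - α) * kakCount α x ≤ x := by
  have hx0 : 0 < x := one_pos.trans_le hx
  have hP := isIntervalPartition_kakPieces hα one_pos (p := (0, x)) hx0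
  have hmin : min α (1 - α) ≤ 1 := (min_le_left _ _).trans hα.2.le
  calc min α (1 - α) * kakCount α x
      = ∑ _q ∈ kakPieces α 1 (0, x), min α (1 - α) * 1 := by simp [kakCount, mul_comm]
    _ ≤ ∑ q ∈ kakPieces α 1 (0, x), (q.2 - q.1) := Finset.sum_le_sum fun q hq =>
        le_length_of_mem_kakPieces hα one_pos (by simpa using hmin.trans hx) hq
    _ = x := by rw [hP.sum_length hx0.le, sub_zero]

lemma tendsto_kakCount_div_sub (hα : α ∈ Set.Ioo (0 : ℝ) 1) :
    Tendsto (fun x => kakCount α x / x - kakCount α (α * x) / (α * x)) atTop (𝓝 0) := by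
  have hβ : 0 < 1 - α := sub_pos.2 hα.2
  have hmin : 0 < min α (1 - α) := lt_min hα.1 hβ
  refine tendsto_sub_comp_of_convexComb (α := α) (β := 1 - α) (B := (min α (1 - α))⁻¹)
    (a := (α * ·)) (b := ((1 - α) * ·)) (Z := fun x => kakCount α x / x) hα.1 hβ (by ring)
    (tendsto_id.const_mul_atTop hα.1) (tendsto_id.const_mul_atTop hβ)
    (fun x => mul_left_comm _ _ _) ?_ ?_
  · filter_upwards [eventually_ge_atTop 1] with x hx
    have hx0 : 0 < x := one_pos.trans_le hx
    rw [abs_of_nonneg (by positivity), div_le_iff₀ hx0, ← div_eq_inv_mul, le_div_iff₀' hmin]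
    exact min_mul_kakCount_le hα hx
  · filter_upwards [eventually_ge_atTop 1] with x hx
    have := one_pos.trans_le hx
    have := hα.1.ne'
    rw [kakCount_of_one_le hα hx]
    push_cast
    field_simp

/-- `N` is regularly varying along `c` with index `1`: `N (c x) ∼ c N x` as `x → ∞`. -/
def ScalesBy (N : ℝ → ℝ) (c : ℝ) : Prop := Tendsto (fun x => N (c * x) / N x) atTop (𝓝 c)

lemma scalesBy_one {N : ℝ → ℝ} (hN : ∀ᶠ x in atTop, N x ≠ 0) : ScalesBy N 1 := by
  refine tendsto_const_nhds.congr' ?_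
  filter_upwards [hN] with x hx
  rw [one_mul, div_self hx]

lemma ScalesBy.mul {N : ℝ → ℝ} {a c : ℝ} (hc : 0 < c) (hN : ∀ᶠ x in atTop, N x ≠ 0)
    (hNa : ScalesBy N a) (hNc : ScalesBy N c) : ScalesBy N (a * c) := by
  have hcx : Tendsto (c * ·) atTop atTop := tendsto_id.const_mul_atTop hc
  refine ((hNa.comp hcx).mul hNc).congr' ?_
  filter_upwards [hcx.eventually hN] with x hx
  rw [Function.comp_apply, div_mul_div_cancel₀ hx, mul_assoc]

lemma scalesBy_kakCount (hα : α ∈ Set.Ioo (0 : ℝ) 1) : ScalesBy (fun x => kakCount α x) α := by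
  have hZ := (tendsto_kakCount_div_sub hα).norm
  rw [norm_zero] at hZ
  refine tendsto_iff_norm_sub_tendsto_zero.2
    (squeeze_zero' (Eventually.of_forall fun _ => norm_nonneg _) ?_ hZ)
  filter_upwards [eventually_gt_atTop 0] with x hx
  have hα0 := hα.1
  have hN := kakCount_pos hα hx
  have hfactor : (kakCount α (α * x) / kakCount α x - α : ℝ) =
      (kakCount α x / x - kakCount α (α * x) / (α * x)) * -(α * (x / kakCount α x)) := by
    field_simp
    ring
  have hle : ‖-(α * (x / kakCount α x))‖ ≤ 1 := by
    rw [norm_neg, Real.norm_of_nonneg (by positivity)]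
    exact mul_le_one₀ hα.2.le (by positivity) ((div_le_one hN).2 (le_kakCount hα hx))
  rw [hfactor, norm_mul]
  exact mul_le_of_le_one_right (norm_nonneg _) hle

lemma scalesBy_kakCount_one_sub (hα : α ∈ Set.Ioo (0 : ℝ) 1) :
    ScalesBy (fun x => kakCount α x) (1 - α) := by
  refine ((scalesBy_kakCount hα).const_sub 1).congr' ?_
  filter_upwards [eventually_ge_atTop 1] with x hx
  have hN := (kakCount_pos hα (one_pos.trans_le hx)).ne'
  rw [sub_eq_iff_eq_add', ← add_div, ← Nat.cast_add, ← kakCount_of_one_le hα hx, div_self hN]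

end Count

section Step

variable {α t : ℝ} {I p q : ℝ × ℝ} {P : Finset (ℝ × ℝ)}

/-- The mesh of a finite collection of intervals, i.e. their maximal length (junk value `0` for the
empty collection). -/
noncomputable def kakMesh (P : Finset (ℝ × ℝ)) : ℝ :=
  sSup ((fun p : ℝ × ℝ => p.2 - p.1) '' P)

lemma length_le_kakMesh (hp : p ∈ P) : p.2 - p.1 ≤ kakMesh P :=
  le_csSup (P.finite_toSet.image _).bddAbove (Set.mem_image_of_mem _ hp)

lemma kakMesh_le (hP : P.Nonempty) (h : ∀ p ∈ P, p.2 - p.1 ≤ t) : kakMesh P ≤ t :=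
  csSup_le (hP.to_set.image _) (Set.forall_mem_image.2 h)

lemma mem_kakMax_iff : p ∈ kakMax P ↔ p ∈ P ∧ p.2 - p.1 = kakMesh P := by
  rw [kakMax, Finset.mem_filter]
  exact and_congr_right fun hp =>
    ⟨fun h => (length_le_kakMesh hp).antisymm (kakMesh_le ⟨p, hp⟩ h),
      fun h q hq => h ▸ length_le_kakMesh hq⟩

lemma kakMax_nonempty (hP : P.Nonempty) : (kakMax P).Nonempty :=
  let ⟨p, hp, hmax⟩ := P.exists_max_image (fun p => p.2 - p.1) hP
  ⟨p, Finset.mem_filter.2 ⟨hp, hmax⟩⟩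

lemma IsIntervalPartition.kakMesh_pos (hP : IsIntervalPartition I P) (hI : I.1 < I.2) :
    0 < kakMesh P :=
  let ⟨p, hp⟩ := hP.nonempty hI
  (sub_pos.2 (hP.lt p hp)).trans_le (length_le_kakMesh hp)

/-- One step of the α-Kakutani procedure: every interval of maximal length is split. -/
noncomputable def kakStep (α : ℝ) (P : Finset (ℝ × ℝ)) : Finset (ℝ × ℝ) :=
  (P \ kakMax P) ∪ (kakMax P).biUnion (kakSplit α)

lemma mem_kakStep :
    q ∈ kakStep α P ↔ q ∈ P ∧ q ∉ kakMax P ∨ ∃ p ∈ kakMax P, q ∈ kakSplit α p := by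
  rw [kakStep, Finset.mem_union, Finset.mem_sdiff, Finset.mem_biUnion]

lemma kakStep_eq_biUnion (α : ℝ) (P : Finset (ℝ × ℝ)) :
    kakStep α P = P.biUnion fun p => if p ∈ kakMax P then kakSplit α p else {p} := by
  ext q
  have hsub : kakMax P ⊆ P := Finset.filter_subset _ _
  rw [mem_kakStep, Finset.mem_biUnion]
  grind

lemma isIntervalPartition_ite_kakSplit (c : Prop) [Decidable c] (hα : α ∈ Set.Ioo (0 : ℝ) 1)
    (hp : p.1 < p.2) : IsIntervalPartition p (if c then kakSplit α p else {p}) := by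
  split_ifs
  · exact isIntervalPartition_kakSplit hα hp
  · exact .singleton hp

lemma isIntervalPartition_kakStep (hα : α ∈ Set.Ioo (0 : ℝ) 1) (hP : IsIntervalPartition I P) :
    IsIntervalPartition I (kakStep α P) := by
  rw [kakStep_eq_biUnion]
  exact hP.biUnion fun p hp => isIntervalPartition_ite_kakSplit _ hα (hP.lt p hp)

lemma length_lt_kakMesh_of_mem_kakStep (hα : α ∈ Set.Ioo (0 : ℝ) 1)
    (hP : IsIntervalPartition I P) (hq : q ∈ kakStep α P) : q.2 - q.1 < kakMesh P := by
  obtain ⟨hqP, hqmax⟩ | ⟨p, hp, hqp⟩ := mem_kakStep.1 hq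
  · exact (length_le_kakMesh hqP).lt_of_ne fun h => hqmax (mem_kakMax_iff.2 ⟨hqP, h⟩)
  · obtain ⟨hpP, hp⟩ := mem_kakMax_iff.1 hp
    exact hp ▸ length_lt_of_mem_kakSplit hα (hP.lt p hpP) hqp

lemma card_lt_card_kakStep (hα : α ∈ Set.Ioo (0 : ℝ) 1) (hP : IsIntervalPartition I P)
    (hI : I.1 < I.2) : P.card < (kakStep α P).card := by
  have hQ (p) (hp : p ∈ P) := isIntervalPartition_ite_kakSplit (p ∈ kakMax P) hα (hP.lt p hp)
  obtain ⟨p, hp⟩ := kakMax_nonempty (hP.nonempty hI)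
  have hpP : p ∈ P := (mem_kakMax_iff.1 hp).1
  rw [kakStep_eq_biUnion, hP.card_biUnion hQ, Finset.card_eq_sum_ones]
  refine Finset.sum_lt_sum (fun q hq => ((hQ q hq).nonempty (hP.lt q hq)).card_pos) ⟨p, hpP, ?_⟩
  rw [if_pos hp, Finset.card_eq_sum_ones, sum_kakSplit hα.1 (hP.lt p hpP)]
  exact one_lt_two

lemma biUnion_kakPieces_kakStep (hα : α ∈ Set.Ioo (0 : ℝ) 1) (ht : 0 < t) (h : t ≤ kakMesh P) :
    (kakStep α P).biUnion (kakPieces α t) = P.biUnion (kakPieces α t) := by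
  rw [kakStep_eq_biUnion, Finset.biUnion_biUnion]
  refine Finset.biUnion_congr rfl fun p _ => ?_
  split_ifs with hp
  · exact (kakPieces_of_le hα ht (h.trans_eq (mem_kakMax_iff.1 hp).2.symm)).symm
  · exact Finset.singleton_biUnion

end Step

section Sequence

variable {α : ℝ} {m n : ℕ} {q : ℝ × ℝ}

/-- The α-Kakutani sequence of partitions of `[0, 1]`. -/
noncomputable def kakSeq (α : ℝ) (m : ℕ) : Finset (ℝ × ℝ) := (kakStep α)^[m] {(0, 1)}

lemma kakSeq_zero (α : ℝ) : kakSeq α 0 = {(0, 1)} := rfl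

lemma kakSeq_succ (α : ℝ) (m : ℕ) : kakSeq α (m + 1) = kakStep α (kakSeq α m) :=
  Function.iterate_succ_apply' _ _ _

lemma eq_kakSeq {π : ℕ → Finset (ℝ × ℝ)} (h0 : π 0 = {((0 : ℝ), (1 : ℝ))})
    (hstep : ∀ m, π (m + 1) = kakStep α (π m)) : π = kakSeq α := by
  funext m
  induction m with
  | zero => exact h0
  | succ m ih => rw [hstep, ih, kakSeq_succ]

lemma isIntervalPartition_kakSeq (hα : α ∈ Set.Ioo (0 : ℝ) 1) (m : ℕ) :
    IsIntervalPartition (0, 1) (kakSeq α m) := by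
  induction m with
  | zero => exact .singleton one_pos
  | succ m ih => exact kakSeq_succ α m ▸ isIntervalPartition_kakStep hα ih

lemma kakMesh_kakSeq_pos (hα : α ∈ Set.Ioo (0 : ℝ) 1) (m : ℕ) : 0 < kakMesh (kakSeq α m) :=
  (isIntervalPartition_kakSeq hα m).kakMesh_pos one_pos

lemma antitone_kakMesh_kakSeq (hα : α ∈ Set.Ioo (0 : ℝ) 1) :
    Antitone fun m => kakMesh (kakSeq α m) := by
  refine antitone_nat_of_succ_le fun m => ?_
  refine kakMesh_le ((isIntervalPartition_kakSeq hα (m + 1)).nonempty one_pos) fun q hq => ?_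
  rw [kakSeq_succ] at hq
  exact (length_lt_kakMesh_of_mem_kakStep hα (isIntervalPartition_kakSeq hα m) hq).le

lemma kakMesh_kakSeq_le_one (hα : α ∈ Set.Ioo (0 : ℝ) 1) (m : ℕ) : kakMesh (kakSeq α m) ≤ 1 :=
  (antitone_kakMesh_kakSeq hα m.zero_le).trans
    (kakMesh_le (Finset.singleton_nonempty _) (by simp [kakSeq_zero]))

lemma lt_card_kakSeq (hα : α ∈ Set.Ioo (0 : ℝ) 1) (m : ℕ) : m < (kakSeq α m).card := by
  induction m with
  | zero => exact Finset.card_pos.2 (Finset.singleton_nonempty _)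
  | succ m ih =>
    rw [kakSeq_succ]
    exact Nat.lt_of_le_of_lt ih
      (card_lt_card_kakStep hα (isIntervalPartition_kakSeq hα m) one_pos)

lemma kakSeq_succ_eq_biUnion_kakPieces (hα : α ∈ Set.Ioo (0 : ℝ) 1) (hmn : m ≤ n + 1) :
    kakSeq α (n + 1) = (kakSeq α m).biUnion (kakPieces α (kakMesh (kakSeq α n))) := by
  induction hmn using Nat.decreasingInduction with
  | of_succ k hk ih =>
    rw [ih, kakSeq_succ, biUnion_kakPieces_kakStep hα (kakMesh_kakSeq_pos hα n)
      (antitone_kakMesh_kakSeq hα (Nat.lt_succ_iff.1 hk))]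
  | self =>
    have hsingle : ∀ q ∈ kakSeq α (n + 1), kakPieces α (kakMesh (kakSeq α n)) q = {q} :=
      fun q hq => kakPieces_of_lt
        (length_lt_kakMesh_of_mem_kakStep hα (isIntervalPartition_kakSeq hα n)
          (kakSeq_succ α n ▸ hq))
    rw [Finset.biUnion_congr rfl hsingle, Finset.biUnion_singleton_eq_self]

lemma card_kakSeq_succ (hα : α ∈ Set.Ioo (0 : ℝ) 1) (n : ℕ) :
    (kakSeq α (n + 1)).card = kakCount α (kakMesh (kakSeq α n))⁻¹ := by
  rw [kakSeq_succ_eq_biUnion_kakPieces hα (n + 1).zero_le, kakSeq_zero, Finset.singleton_biUnion,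
    card_kakPieces hα (kakMesh_kakSeq_pos hα n), sub_zero, one_div]

lemma tendsto_inv_kakMesh_kakSeq (hα : α ∈ Set.Ioo (0 : ℝ) 1) :
    Tendsto (fun n => (kakMesh (kakSeq α n))⁻¹) atTop atTop := by
  have hmin : 0 < min α (1 - α) := lt_min hα.1 (sub_pos.2 hα.2)
  refine tendsto_atTop_mono (fun n => ?_) (tendsto_natCast_atTop_atTop.const_mul_atTop hmin)
  have hn : n ≤ kakCount α (kakMesh (kakSeq α n))⁻¹ := by
    rw [← card_kakSeq_succ hα]
    exact (n.le_succ.trans_lt (lt_card_kakSeq hα (n + 1))).le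
  calc min α (1 - α) * n ≤ min α (1 - α) * kakCount α (kakMesh (kakSeq α n))⁻¹ := by gcongr
    _ ≤ (kakMesh (kakSeq α n))⁻¹ := min_mul_kakCount_le hα
        (one_le_inv_iff₀.2 ⟨kakMesh_kakSeq_pos hα n, kakMesh_kakSeq_le_one hα n⟩)

lemma scalesBy_length_of_mem_kakSeq (hα : α ∈ Set.Ioo (0 : ℝ) 1) (hq : q ∈ kakSeq α m) :
    ScalesBy (fun x => kakCount α x) (q.2 - q.1) := by
  have hN : ∀ᶠ x in atTop, (kakCount α x : ℝ) ≠ 0 :=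
    (eventually_gt_atTop 0).mono fun x hx => (kakCount_pos hα hx).ne'
  induction m generalizing q with
  | zero =>
    obtain rfl : q = (0, 1) := Finset.mem_singleton.1 hq
    simpa using scalesBy_one hN
  | succ m ih =>
    rw [kakSeq_succ] at hq
    obtain ⟨hqP, -⟩ | ⟨p, hp, hqp⟩ := mem_kakStep.1 hq
    · exact ih hqP
    have hpP := (mem_kakMax_iff.1 hp).1
    have hlen : 0 < p.2 - p.1 := sub_pos.2 ((isIntervalPartition_kakSeq hα m).lt p hpP)
    simp only [kakSplit_eq, Finset.mem_insert, Finset.mem_singleton] at hqp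
    obtain rfl | rfl := hqp
    · exact kakCut_sub_left α p ▸ (scalesBy_kakCount hα).mul hlen hN (ih hpP)
    · exact right_sub_kakCut α p ▸ (scalesBy_kakCount_one_sub hα).mul hlen hN (ih hpP)

lemma tendsto_card_kakPieces_div_card_kakSeq (hα : α ∈ Set.Ioo (0 : ℝ) 1) (hq : q ∈ kakSeq α m) :
    Tendsto (fun n => ((kakPieces α (kakMesh (kakSeq α n)) q).card : ℝ) /
      (kakSeq α (n + 1)).card) atTop (𝓝 (q.2 - q.1)) := by
  refine ((scalesBy_length_of_mem_kakSeq hα hq).comp (tendsto_inv_kakMesh_kakSeq hα)).congr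
    fun n => ?_
  rw [card_kakSeq_succ hα, card_kakPieces hα (kakMesh_kakSeq_pos hα n), div_eq_mul_inv (q.2 - q.1),
    Function.comp_apply]

variable {E : Type*} [NormedAddCommGroup E] {f : ℝ → E} {ε : ℝ}

lemma exists_kakSeq_oscillation_le (hα : α ∈ Set.Ioo (0 : ℝ) 1)
    (hf : ContinuousOn f (Set.Icc 0 1)) (hε : 0 < ε) :
    ∃ m, ∀ p ∈ kakSeq α m, ∀ x ∈ Set.Ioc p.1 p.2, ‖f p.2 - f x‖ ≤ ε := by
  obtain ⟨δ, hδ, hfδ⟩ := Metric.uniformContinuousOn_iff_le.1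
    (isCompact_Icc.uniformContinuousOn_of_continuous hf) ε hε
  obtain ⟨m, hm⟩ := ((tendsto_inv_kakMesh_kakSeq hα).eventually_ge_atTop δ⁻¹).exists
  have hmδ : kakMesh (kakSeq α m) ≤ δ := (inv_le_inv₀ hδ (kakMesh_kakSeq_pos hα m)).1 hm
  have hP := isIntervalPartition_kakSeq hα m
  refine ⟨m, fun p hp x hx => ?_⟩
  rw [← dist_eq_norm]
  refine hfδ _ (Set.Ioc_subset_Icc_self (hP.right_mem_Ioc hp)) _
    (Set.Ioc_subset_Icc_self (hP.Ioc_subset hp hx)) ?_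
  rw [Real.dist_eq, abs_of_nonneg (sub_nonneg.2 hx.2)]
  linarith [hx.1, length_le_kakMesh hp]

variable [NormedSpace ℝ E]

lemma norm_average_kakSeq_sub_le (hα : α ∈ Set.Ioo (0 : ℝ) 1) (hmn : m ≤ n + 1)
    (hε : ∀ p ∈ kakSeq α m, ∀ x ∈ Set.Ioc p.1 p.2, ‖f p.2 - f x‖ ≤ ε) :
    ‖((kakSeq α (n + 1)).card : ℝ)⁻¹ • ∑ q ∈ kakSeq α (n + 1), f q.2 -
      ∑ p ∈ kakSeq α m, (((kakPieces α (kakMesh (kakSeq α n)) p).card : ℝ) /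
        (kakSeq α (n + 1)).card) • f p.2‖ ≤ ε := by
  have hP := isIntervalPartition_kakSeq hα m
  have hcard : (0 : ℝ) < (kakSeq α (n + 1)).card :=
    Nat.cast_pos.2 (Nat.zero_lt_of_lt (lt_card_kakSeq hα (n + 1)))
  have hbound := hP.norm_sum_biUnion_sub_le
    (fun p hp => isIntervalPartition_kakPieces hα (kakMesh_kakSeq_pos hα n) (hP.lt p hp)) hε
  rw [← kakSeq_succ_eq_biUnion_kakPieces hα hmn] at hbound
  simp only [div_eq_inv_mul, mul_smul, Nat.cast_smul_eq_nsmul ℝ, ← Finset.smul_sum, ← smul_sub]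
  rwa [norm_smul, norm_inv, Real.norm_of_nonneg hcard.le, inv_mul_le_iff₀ hcard]

lemma norm_sum_length_smul_kakSeq_sub_integral_le [CompleteSpace E] (hα : α ∈ Set.Ioo (0 : ℝ) 1)
    (hf : ContinuousOn f (Set.Icc 0 1))
    (hε : ∀ p ∈ kakSeq α m, ∀ x ∈ Set.Ioc p.1 p.2, ‖f p.2 - f x‖ ≤ ε) :
    ‖∑ p ∈ kakSeq α m, (p.2 - p.1) • f p.2 - ∫ x in (0 : ℝ)..1, f x‖ ≤ ε := by
  have hint : MeasureTheory.IntegrableOn f (Set.Ioc 0 1) :=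
    hf.integrableOn_Icc.mono_set Set.Ioc_subset_Icc_self
  rw [intervalIntegral.integral_of_le zero_le_one]
  simpa using (isIntervalPartition_kakSeq hα m).norm_riemannSum_sub_integral_le zero_le_one hint hε

end Sequence

theorem kakutani_alpha_uniformly_distributed_general {E : Type*} [NormedAddCommGroup E]
    [NormedSpace ℝ E] [CompleteSpace E] (α : ℝ) (hα : α ∈ Set.Ioo (0 : ℝ) 1)
    (π : ℕ → Finset (ℝ × ℝ))
    (h0 : π 0 = {((0 : ℝ), (1 : ℝ))})
    (hstep : ∀ m, π (m + 1) =
      (π m \ kakMax (π m)) ∪ (kakMax (π m)).biUnion (kakSplit α))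
    (f : ℝ → E) (hf : ContinuousOn f (Set.Icc 0 1)) :
    Tendsto (fun m => ((π m).card : ℝ)⁻¹ • ∑ p ∈ π m, f p.2) atTop
      (𝓝 (∫ t in (0 : ℝ)..1, f t)) := by
  rw [eq_kakSeq h0 hstep, ← tendsto_add_atTop_iff_nat 1, Metric.tendsto_nhds]
  intro ε hε
  obtain ⟨m, hm⟩ := exists_kakSeq_oscillation_le hα hf (show 0 < ε / 3 by positivity)
  have hweights := tendsto_finsetSum (kakSeq α m) fun p hp =>
    (tendsto_card_kakPieces_div_card_kakSeq hα hp).smul_const (f p.2)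
  filter_upwards [Metric.tendsto_nhds.1 hweights (ε / 3) (by positivity), eventually_ge_atTop m]
    with n hn hmn
  have haverage := norm_average_kakSeq_sub_le hα (hmn.trans n.le_succ) hm
  have hriemann := norm_sum_length_smul_kakSeq_sub_integral_le hα hf hm
  rw [← dist_eq_norm] at haverage hriemann
  refine (dist_triangle4 _ _ _ _).trans_lt ((add_lt_add_of_lt_of_le
    (add_lt_add_of_le_of_lt haverage hn) hriemann).trans_eq ?_)
  ring

/-- **Kakutani's theorem.** Fix `α ∈ (0,1)` and let `{π_m}` be the α-Kakutani sequence
of partitions of `[0,1]`: `π_0 = {[0,1]}`, and `π_m` is obtained from `π_{m−1}` by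
splitting every interval of maximal length in proportion `α : (1 − α)`. Then for every
continuous `f : [0,1] → ℝ`, the averages of `f` over the right endpoints of the
intervals of `π_m` converge to `∫_0^1 f(t) dt`. -/
theorem kakutani_alpha_uniformly_distributed (α : ℝ) (hα : α ∈ Set.Ioo (0 : ℝ) 1)
    (π : ℕ → Finset (ℝ × ℝ))
    (h0 : π 0 = {((0 : ℝ), (1 : ℝ))})
    (hstep : ∀ m, π (m + 1) =
      (π m \ kakMax (π m)) ∪ (kakMax (π m)).biUnion (kakSplit α))
    (f : ℝ → ℝ) (hf : ContinuousOn f (Set.Icc 0 1)) :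
    Tendsto (fun m => (∑ p ∈ π m, f p.2) / ((π m).card : ℝ)) atTop
      (𝓝 (∫ t in (0 : ℝ)..1, f t)) := by
  simpa only [smul_eq_mul, inv_mul_eq_div] using
    kakutani_alpha_uniformly_distributed_general α hα π h0 hstep f hf
end

section
/- Let σ be an irreducible incommensurable multiscale substitution scheme in ℝ^d, let {π_m} be a Kakutani sequence of partitions of a prototile T_i ∈ τ_σ, and let 1 ≤ r ≤ n. Then the matrix Q_σ has positive entries and all its rows are equal; writing q_h for the common entry in column h of Q_σ, the ratio between the number of tiles of type r in π_m and the total number of tiles of π_m converges, as m → ∞, to [Σ_{h=1}^n q_h · Σ_{k=1}^{k_hr} (1 − (β_hr^(k))^d)] / [Σ_{h,j=1}^n q_h · Σ_{k=1}^{k_hj} (1 − (β_hj^(k))^d)]. -/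
/-! View the types as vertices and the substitution tiles of `T i` as edges leaving `i`. The edge of
a tile has the relative volume `β ^ d` of that tile as its weight and `-log (β ^ d)` as its length.
Volumes add up, so the edges leaving a vertex have total weight `1`. A Kakutani step splits trees of
paths at their roots. Hence the tiles of type `r` in `π m` correspond to the paths from `i` to `r`
whose length has just reached `t = log (vol (T i) / v)`, where `v` is the largest volume in `π m`,
and `t → ∞` as `m → ∞`. The number of these paths is a combination of differences of the numbers
`N j i t` of paths from `i` to `j` of length less than `t`.

The functions `exp (-t) * N j v t` satisfy a renewal equation: up to an error that tends to `0`,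
each is a weighted average of the others, shifted back by the lengths of the edges. So if one is
close to the largest limsup at a time `t`, the others are close to it at `t` minus the length of any
path. By incommensurability these lengths have eventually arbitrarily small gaps, and the largest
limsup is approached uniformly on long windows. The same holds for the smallest liminf. Integrated
over a window and summed against a stationary vector `q`, the functions give a conserved quantity,
which determines both extremal values to be `q j / C` for a constant `C`.

The rows of `Q` are such stationary vectors, because `M` is an irreducible stochastic matrix: a
maximum principle shows that the columns of the adjugate of `1 - M` are constant and that the
cofactors on its diagonal are positive. -/

open MeasureTheory Filter Topology
open scoped Pointwise

noncomputable section

/-- Euclidean space `ℝ^d`. -/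
abbrev Euc (d : ℕ) : Type := EuclideanSpace ℝ (Fin d)

/-- A tile in `ℝ^d`: a bounded Lebesgue measurable set of positive measure whose
boundary has measure zero. -/
def IsTile {d : ℕ} (T : Set (Euc d)) : Prop :=
  Bornology.IsBounded T ∧ NullMeasurableSet T volume ∧ 0 < volume T ∧
    volume (frontier T) = 0

/-- A multiscale substitution scheme in `ℝ^d` on `n` prototiles `T 1, …, T n`,
with `numSub i j` substitution tiles of type `j` in `ω(T i)`, scaling constants
`scale i j k`, constants of substitution
`β_ij^(k) = (vol T_j / vol T_i)^(1/d) · α_ij^(k) ∈ (0,1)`, and a nonempty family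
of substitution rules, each rule assigning to every prototile `T i` a partition of
`T i` into sets isometric to the substitution tiles `scale i j k • T j`. -/
structure MSScheme (d n : ℕ) where
  T : Fin n → Set (Euc d)
  tile : ∀ i, IsTile (T i)
  numSub : Fin n → Fin n → ℕ
  scale : (i j : Fin n) → Fin (numSub i j) → ℝ
  scale_pos : ∀ i j k, 0 < scale i j k
  beta_pos : ∀ i j k,
    0 < ((volume (T j)).toReal / (volume (T i)).toReal) ^ (1 / (d : ℝ)) * scale i j k
  beta_lt_one : ∀ i j k,
    ((volume (T j)).toReal / (volume (T i)).toReal) ^ (1 / (d : ℝ)) * scale i j k < 1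
  rules : Set ((i j : Fin n) → Fin (numSub i j) → Set (Euc d))
  rules_nonempty : rules.Nonempty
  rules_iso : ∀ ϱ ∈ rules, ∀ i j k, ∃ φ : Euc d ≃ᵢ Euc d,
    ϱ i j k = φ '' (scale i j k • T j)
  rules_disjoint : ∀ ϱ ∈ rules, ∀ i : Fin n, ∀ p q : Σ j : Fin n, Fin (numSub i j),
    p ≠ q → Disjoint (interior (ϱ i p.1 p.2)) (interior (ϱ i q.1 q.2))
  rules_cover : ∀ ϱ ∈ rules, ∀ i : Fin n,
    (⋃ p : Σ j : Fin n, Fin (numSub i j), ϱ i p.1 p.2) = T i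

/-- The constants of substitution `β_ij^(k) = (vol T_j / vol T_i)^(1/d) · α_ij^(k)`. -/
def MSScheme.beta {d n : ℕ} (σ : MSScheme d n) (i j : Fin n)
    (k : Fin (σ.numSub i j)) : ℝ :=
  ((volume (σ.T j)).toReal / (volume (σ.T i)).toReal) ^ (1 / (d : ℝ)) * σ.scale i j k

/-- A labeled tile: a subset of `ℝ^d` together with a type label. -/
structure LTile (d n : ℕ) where
  carrier : Set (Euc d)
  type : Fin n

noncomputable instance {d n : ℕ} : DecidableEq (LTile d n) := Classical.decEq _

/-- `SubstitutesTo σ S P` : the labeled tile `S`, a rescaled isometric copy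
`φ (a • T_{type S})` of the prototile of its type, is partitioned by the collection
`P` obtained by applying some substitution rule of the scheme,
`ϱ(a·φ(T_i)) = a·φ(ϱ(T_i))`, with the types of the pieces given by the scheme. -/
def SubstitutesTo {d n : ℕ} (σ : MSScheme d n) (S : LTile d n)
    (P : Finset (LTile d n)) : Prop :=
  ∃ ϱ ∈ σ.rules, ∃ a : ℝ, 0 < a ∧ ∃ φ : Euc d ≃ᵢ Euc d,
    S.carrier = φ '' (a • σ.T S.type) ∧
    P = Finset.image
      (fun p : Σ j : Fin n, Fin (σ.numSub S.type j) =>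
        (⟨φ '' (a • ϱ S.type p.1 p.2), p.1⟩ : LTile d n)) Finset.univ

open Classical in
/-- The tiles of maximal volume in a partition. -/
def maxTiles {d n : ℕ} (P : Finset (LTile d n)) : Finset (LTile d n) :=
  P.filter fun S => ∀ S' ∈ P, volume S'.carrier ≤ volume S.carrier

/-- A Kakutani sequence of partitions of the prototile `T i`: start with the trivial
partition, and at each step substitute exactly the tiles of maximal volume, each
according to an arbitrarily and independently chosen substitution rule. -/
def IsKakutaniSeq {d n : ℕ} (σ : MSScheme d n) (i : Fin n)
    (π : ℕ → Finset (LTile d n)) : Prop :=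
  π 0 = {(⟨σ.T i, i⟩ : LTile d n)} ∧
  ∀ m, ∃ repl : LTile d n → Finset (LTile d n),
    (∀ S ∈ maxTiles (π m), SubstitutesTo σ S (repl S)) ∧
    π (m + 1) = (π m \ maxTiles (π m)) ∪ (maxTiles (π m)).biUnion repl

/-- A generation sequence of partitions of the prototile `T i`: start with the trivial
partition, and at each step substitute all tiles, each according to an arbitrarily
and independently chosen substitution rule. -/
def IsGenSeq {d n : ℕ} (σ : MSScheme d n) (i : Fin n)
    (δ : ℕ → Finset (LTile d n)) : Prop :=
  δ 0 = {(⟨σ.T i, i⟩ : LTile d n)} ∧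
  ∀ m, ∃ repl : LTile d n → Finset (LTile d n),
    (∀ S ∈ δ m, SubstitutesTo σ S (repl S)) ∧
    δ (m + 1) = (δ m).biUnion repl

/-- A marking sequence of a sequence of partitions of `U`: finite sets of (distinct)
points of `U` such that every tile of the `m`-th partition contains exactly one point
of `x m`. -/
def IsMarking {d n : ℕ} (U : Set (Euc d)) (γ : ℕ → Finset (LTile d n))
    (x : ℕ → Finset (Euc d)) : Prop :=
  ∀ m, (↑(x m) : Set (Euc d)) ⊆ U ∧
    ∀ S ∈ γ m, ∃! p, p ∈ x m ∧ p ∈ S.carrier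

/-- An `r`-marking sequence: finite sets of (distinct) points of `U` such that every
tile of type `r` of the `m`-th partition contains exactly one point of `x m`, and
every point of `x m` lies in a tile of type `r`. -/
def IsRMarking {d n : ℕ} (U : Set (Euc d)) (γ : ℕ → Finset (LTile d n))
    (r : Fin n) (x : ℕ → Finset (Euc d)) : Prop :=
  ∀ m, (↑(x m) : Set (Euc d)) ⊆ U ∧
    (∀ S ∈ γ m, S.type = r → ∃! p, p ∈ x m ∧ p ∈ S.carrier) ∧
    ∀ p ∈ x m, ∃ S ∈ γ m, S.type = r ∧ p ∈ S.carrier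

/-- A sequence of finite sets of points is uniformly distributed in `U` if the
normalized sampling averages of every continuous function converge to its
normalized Lebesgue integral over `U`. -/
def MarkingUD {d : ℕ} (U : Set (Euc d)) (x : ℕ → Finset (Euc d)) : Prop :=
  ∀ f : Euc d → ℝ, ContinuousOn f U →
    Tendsto (fun m => (∑ p ∈ x m, f p) / ((x m).card : ℝ)) atTop
      (𝓝 ((∫ t in U, f t) / (volume U).toReal))

/-- Irreducibility: every type `j` is produced from every prototile `T i` by some
finite (positive) number of substitutions. -/
def MSScheme.Irreducible {d n : ℕ} (σ : MSScheme d n) : Prop :=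
  ∀ i j : Fin n, Relation.TransGen (fun a b => 0 < σ.numSub a b) i j

/-- `σ.IsClosedPathLogVol i a` : some tile of type `i` produced from `T i` by finitely
many substitutions has `log (vol T' / vol T_i) = a`; equivalently, `a` is the sum of
`log ((β_ij^(k))^d)` along some closed path from `i` to `i` in the associated graph. -/
def MSScheme.IsClosedPathLogVol {d n : ℕ} (σ : MSScheme d n)
    (i : Fin n) (a : ℝ) : Prop :=
  ∃ m : ℕ, 0 < m ∧ ∃ p : Fin (m + 1) → Fin n, p 0 = i ∧ p (Fin.last m) = i ∧
    ∃ e : (t : Fin m) → Fin (σ.numSub (p t.castSucc) (p t.succ)),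
      a = ∑ t : Fin m, Real.log (σ.beta (p t.castSucc) (p t.succ) (e t) ^ d)

/-- Incommensurability: there are tiles `T'` of type `i` produced from `T i` and `T''`
of type `j` produced from `T j` with `log (vol T' / vol T_i)` not a rational multiple
of `log (vol T'' / vol T_j)`. -/
def MSScheme.Incommensurable {d n : ℕ} (σ : MSScheme d n) : Prop :=
  ∃ (i j : Fin n) (a b : ℝ), σ.IsClosedPathLogVol i a ∧ σ.IsClosedPathLogVol j b ∧
    ∀ q : ℚ, a ≠ (q : ℝ) * b

/-- The matrix `(M_σ)_ij = Σ_k (β_ij^(k))^d`. -/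
def Mmat {d n : ℕ} (σ : MSScheme d n) : Matrix (Fin n) (Fin n) ℝ :=
  Matrix.of fun i j => ∑ k : Fin (σ.numSub i j), σ.beta i j k ^ d

/-- The matrix `(M'_σ)_ij = Σ_k (β_ij^(k))^d · log β_ij^(k)`. -/
def M'mat {d n : ℕ} (σ : MSScheme d n) : Matrix (Fin n) (Fin n) ℝ :=
  Matrix.of fun i j => ∑ k : Fin (σ.numSub i j), σ.beta i j k ^ d * Real.log (σ.beta i j k)

/-- `Q_σ = adj (I − M_σ) / (− tr (adj (I − M_σ) · M'_σ))`. -/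
def Qmat {d n : ℕ} (σ : MSScheme d n) : Matrix (Fin n) (Fin n) ℝ :=
  (-(Matrix.trace ((1 - Mmat σ).adjugate * M'mat σ)))⁻¹ • (1 - Mmat σ).adjugate

/-- The number of tiles of type `r` in a partition. -/
def countType {d n : ℕ} (P : Finset (LTile d n)) (r : Fin n) : ℕ :=
  (P.filter fun S => S.type = r).card

/-- The union of the tiles of type `r` in a partition. -/
def typeUnion {d n : ℕ} (P : Finset (LTile d n)) (r : Fin n) : Set (Euc d) :=
  ⋃ S ∈ P.filter (fun S => S.type = r), S.carrier

/-- A fixed scale scheme: all scaling constants equal the contraction constant `α`. -/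
def MSScheme.FixedScale {d n : ℕ} (σ : MSScheme d n) (α : ℝ) : Prop :=
  α ∈ Set.Ioo (0 : ℝ) 1 ∧ ∀ i j k, σ.scale i j k = α

/-- The substitution matrix `S_ij = k_ij` (as a real matrix). -/
def Smat {d n : ℕ} (σ : MSScheme d n) : Matrix (Fin n) (Fin n) ℝ :=
  Matrix.of fun i j => (σ.numSub i j : ℝ)

/-- A primitive scheme: some power of the substitution matrix is entrywise positive. -/
def MSScheme.Primitive {d n : ℕ} (σ : MSScheme d n) : Prop :=
  ∃ k : ℕ, ∀ i j, 0 < (Smat σ ^ k) i j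

end

noncomputable section

/-! ### Semigroups of real numbers without eventual gaps -/

lemma exists_sub_eq_of_mem_addSubgroupClosure {G : Type*} [AddCommGroup G] {S : AddSubmonoid G}
    {x : G} (hx : x ∈ AddSubgroup.closure (S : Set G)) : ∃ u ∈ S, ∃ v ∈ S, u - v = x := by
  induction hx using AddSubgroup.closure_induction with
  | mem x hx => exact ⟨x, hx, 0, S.zero_mem, sub_zero x⟩
  | zero => exact ⟨0, S.zero_mem, 0, S.zero_mem, sub_zero 0⟩
  | add x y _ _ hx hy =>
    obtain ⟨u, hu, v, hv, rfl⟩ := hx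
    obtain ⟨u', hu', v', hv', rfl⟩ := hy
    exact ⟨u + u', S.add_mem hu hu', v + v', S.add_mem hv hv', add_sub_add_comm u u' v v'⟩
  | neg x _ hx =>
    obtain ⟨u, hu, v, hv, rfl⟩ := hx
    exact ⟨v, hv, u, hu, (neg_sub u v).symm⟩

/-- The difference of two elements `u = v + x` of the semigroup gives the points
`(K - k) • v + k • u = K • v + k • x`, `k ≤ K`; for large `K` these fill an interval of length `a`
with gaps `x < ε`, and multiples of `a` translate this interval to infinity. -/
lemma eventually_exists_mem_Icc_of_dense {S : AddSubmonoid ℝ}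
    (hS : Dense (AddSubgroup.closure (S : Set ℝ) : Set ℝ)) {a : ℝ} (ha : a ∈ S) (ha₀ : 0 < a)
    {ε : ℝ} (hε : 0 < ε) : ∀ᶠ s in atTop, ∃ x ∈ S, x ∈ Set.Icc s (s + ε) := by
  obtain ⟨x, hx, hx₀, hxε⟩ := hS.exists_between hε
  obtain ⟨u, hu, v, hv, rfl⟩ := exists_sub_eq_of_mem_addSubgroupClosure hx
  obtain ⟨K, hK⟩ := exists_nat_ge (a / (u - v))
  filter_upwards [eventually_ge_atTop (K * v)] with s hs
  set N := ⌊(s - K * v) / a⌋₊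
  have hN : N * a ≤ s - K * v :=
    (le_div_iff₀ ha₀).1 (Nat.floor_le (div_nonneg (sub_nonneg.2 hs) ha₀.le))
  have hN' : s - K * v < (N + 1) * a := (div_lt_iff₀ ha₀).1 (Nat.lt_floor_add_one _)
  set k := ⌈(s - K * v - N * a) / (u - v)⌉₊
  have hk : s - K * v - N * a ≤ k * (u - v) := (div_le_iff₀ hx₀).1 (Nat.le_ceil _)
  have hk' : k * (u - v) < s - K * v - N * a + (u - v) := by
    have := Nat.ceil_lt_add_one (div_nonneg (sub_nonneg.2 hN) hx₀.le)
    rwa [← sub_lt_iff_lt_add, lt_div_iff₀ hx₀, sub_mul, one_mul, sub_lt_iff_lt_add] at this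
  have hkK : k ≤ K := Nat.ceil_le.2 <| le_trans (by gcongr; linarith) hK
  refine ⟨N • a + ((K - k) • v + k • u), S.add_mem (S.nsmul_mem ha N)
    (S.add_mem (S.nsmul_mem hv _) (S.nsmul_mem hu k)), ?_⟩
  have hval : N • a + ((K - k) • v + k • u) = N * a + K * v + k * (u - v) := by
    simp only [nsmul_eq_mul, Nat.cast_sub hkK]
    ring
  rw [hval]
  constructor <;> linarith

/-! ### Stochastic multigraphs -/

lemma sum_sum_comm {ι κ M : Type*} [Fintype ι] [Fintype κ] [AddCommMonoid M] {A : ι → Type*}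
    {B : κ → Type*} [∀ i, Fintype (A i)] [∀ k, Fintype (B k)] (f : ∀ i, A i → ∀ k, B k → M) :
    ∑ i, ∑ a, ∑ k, ∑ b, f i a k b = ∑ k, ∑ b, ∑ i, ∑ a, f i a k b := by
  simpa only [Fintype.sum_sigma] using Finset.sum_comm (s := Finset.univ) (t := Finset.univ)
    (f := fun (x : Σ i, A i) (y : Σ k, B k) => f x.1 x.2 y.1 y.2)

/-- A finite directed multigraph, `E v w` being the edges from `v` to `w`, whose edges carry
weights in `(0, 1)` such that the edges leaving any vertex have total weight `1`. -/
structure StochasticMultigraph (V : Type*) [Fintype V] where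
  E : V → V → Type*
  fintypeE : ∀ v w, Fintype (E v w)
  weight : ∀ {v w}, E v w → ℝ
  weight_pos : ∀ {v w} (e : E v w), 0 < weight e
  weight_lt_one : ∀ {v w} (e : E v w), weight e < 1
  sum_weight : ∀ v, ∑ w, ∑ e : E v w, weight e = 1

namespace StochasticMultigraph

attribute [instance] fintypeE

variable {V : Type*} [Fintype V] (Γ : StochasticMultigraph V)

/-- The length of an edge, so that an edge of length `l` has weight `exp (-l)`. -/
def len {v w : V} (e : Γ.E v w) : ℝ := -Real.log (Γ.weight e)

lemma exp_neg_len {v w : V} (e : Γ.E v w) : Real.exp (-Γ.len e) = Γ.weight e := by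
  rw [len, neg_neg, Real.exp_log (Γ.weight_pos e)]

lemma len_pos {v w : V} (e : Γ.E v w) : 0 < Γ.len e :=
  neg_pos.2 (Real.log_neg (Γ.weight_pos e) (Γ.weight_lt_one e))

/-- The length of a shortest edge (and `0` if there are no edges). -/
def minLen : ℝ := ⨅ e : Σ v w, Γ.E v w, Γ.len e.2.2

/-- The length of a longest edge (and `0` if there are no edges). -/
def maxLen : ℝ := ⨆ e : Σ v w, Γ.E v w, Γ.len e.2.2

variable {Γ} in
lemma minLen_pos {v w : V} (e : Γ.E v w) : 0 < Γ.minLen := by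
  have : Nonempty (Σ v w, Γ.E v w) := ⟨⟨v, w, e⟩⟩
  obtain ⟨e₀, he₀⟩ := Finite.exists_min fun e : Σ v w, Γ.E v w => Γ.len e.2.2
  exact (Γ.len_pos e₀.2.2).trans_le (le_ciInf he₀)

lemma minLen_le {v w : V} (e : Γ.E v w) : Γ.minLen ≤ Γ.len e :=
  ciInf_le (Set.finite_range _).bddBelow (⟨v, w, e⟩ : Σ v w, Γ.E v w)

lemma len_le_maxLen {v w : V} (e : Γ.E v w) : Γ.len e ≤ Γ.maxLen :=
  le_ciSup (f := fun e : Σ v w, Γ.E v w => Γ.len e.2.2) (Set.finite_range _).bddAbove ⟨v, w, e⟩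

lemma maxLen_nonneg : 0 ≤ Γ.maxLen := Real.iSup_nonneg fun e => (Γ.len_pos e.2.2).le

lemma nonempty_edges (v : V) : Nonempty (Σ w, Γ.E v w) := by
  by_contra h
  rw [not_nonempty_iff, isEmpty_sigma] at h
  simpa using Γ.sum_weight v

lemma two_le_sum_card (v : V) : 2 ≤ ∑ w, Fintype.card (Γ.E v w) := by
  have := Γ.nonempty_edges v
  have hlt : ∑ e : Σ w, Γ.E v w, Γ.weight e.2 < ∑ _e : Σ w, Γ.E v w, 1 :=
    Finset.sum_lt_sum_of_nonempty Finset.univ_nonempty fun e _ => Γ.weight_lt_one e.2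
  rw [Fintype.sum_sigma, Γ.sum_weight] at hlt
  exact Nat.succ_le_of_lt (by simpa [Fintype.card_sigma, ← Nat.cast_sum] using hlt)

/-- The stochastic matrix of the random walk that leaves a vertex along an edge chosen according
to the weights. -/
def transition : Matrix V V ℝ := Matrix.of fun v w => ∑ e : Γ.E v w, Γ.weight e

/-- The average length of the edge that the random walk takes from a vertex chosen according to
the (possibly not normalised) distribution `q`. -/
def meanLen (q : V → ℝ) : ℝ := ∑ v, q v * ∑ w, ∑ e : Γ.E v w, Γ.weight e * Γ.len e

lemma meanLen_pos [Nonempty V] {q : V → ℝ} (hq : ∀ v, 0 < q v) : 0 < Γ.meanLen q := by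
  refine Finset.sum_pos (fun v _ => mul_pos (hq v) ?_) Finset.univ_nonempty
  have := Γ.nonempty_edges v
  rw [← Fintype.sum_sigma']
  exact Finset.sum_pos (fun e _ => mul_pos (Γ.weight_pos e.2) (Γ.len_pos e.2))
    Finset.univ_nonempty

/-! ### Path lengths -/

/-- `Γ.HasPath v w s`: there is a (possibly empty) path from `v` to `w` of total length `s`. -/
inductive HasPath : V → V → ℝ → Prop
  | nil (v : V) : HasPath v v 0
  | cons {u v w : V} {s : ℝ} (e : Γ.E u v) : HasPath v w s → HasPath u w (Γ.len e + s)

namespace HasPath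

variable {Γ} {u v w : V} {s t : ℝ}

lemma trans (h : Γ.HasPath u v s) (h' : Γ.HasPath v w t) : Γ.HasPath u w (s + t) := by
  induction h with
  | nil => rwa [zero_add]
  | cons e _ ih => rw [add_assoc]; exact .cons e (ih h')

lemma nonneg (h : Γ.HasPath v w s) : 0 ≤ s := by
  induction h with
  | nil => exact le_rfl
  | cons e _ ih => exact add_nonneg (Γ.len_pos e).le ih

end HasPath

/-- The lengths of the closed paths based at `v`. -/
def loopLengths (v : V) : AddSubmonoid ℝ where
  carrier := {s | Γ.HasPath v v s}
  zero_mem' := .nil v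
  add_mem' := .trans

/-- The lengths of the paths between any two vertices have eventually arbitrarily small gaps. -/
def HasDenseLengths : Prop :=
  ∀ v w, ∀ ε > 0, ∀ᶠ s in atTop, ∃ p ∈ Set.Icc s (s + ε), Γ.HasPath v w p

variable {Γ}

lemma hasDenseLengths_of_irrational (hconn : ∀ v w, ∃ s, Γ.HasPath v w s) {x y : V} {a b : ℝ}
    (ha : Γ.HasPath x x a) (hb : Γ.HasPath y y b) (hab : Irrational (a / b)) :
    Γ.HasDenseLengths := by
  intro v w ε hε
  obtain ⟨s₁, h₁⟩ := hconn v x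
  obtain ⟨s₂, h₂⟩ := hconn x y
  obtain ⟨s₃, h₃⟩ := hconn y w
  have ha₀ : 0 < a := ha.nonneg.lt_of_ne' fun h => by simp [h] at hab
  have hdense : Dense (AddSubgroup.closure (AddSubmonoid.closure {a, b} : Set ℝ) : Set ℝ) :=
    (dense_addSubgroupClosure_pair_iff.2 hab).mono
      (AddSubgroup.closure_mono AddSubmonoid.subset_closure)
  have haS : a ∈ AddSubmonoid.closure {a, b} := AddSubmonoid.subset_closure (.inl rfl)
  have hev := eventually_exists_mem_Icc_of_dense hdense haS ha₀ hε
  filter_upwards [(tendsto_atTop_add_const_right atTop (-(s₁ + s₂ + s₃)) tendsto_id).eventually hev]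
    with s hs
  obtain ⟨p, hp, hps⟩ := hs
  obtain ⟨k, l, rfl⟩ := (AddSubmonoid.mem_closure_pair _ _ _).1 hp
  have hka : k • a ∈ Γ.loopLengths x := AddSubmonoid.nsmul_mem _ ha k
  have hlb : l • b ∈ Γ.loopLengths y := AddSubmonoid.nsmul_mem _ hb l
  refine ⟨_, ?_, ((h₁.trans hka).trans h₂).trans (.trans hlb h₃)⟩
  simp only [id_eq, Set.mem_Icc] at hps ⊢
  constructor <;> linarith

/-! ### Counting paths and leaves -/

variable (Γ)

lemma ceil_div_minLen_lt {v w : V} (e : Γ.E v w) {t : ℝ} (ht : 0 < t) :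
    ⌈(t - Γ.len e) / Γ.minLen⌉₊ < ⌈t / Γ.minLen⌉₊ := by
  have hmin := minLen_pos e
  have hle : (t - Γ.len e) / Γ.minLen ≤ t / Γ.minLen - 1 := by
    rw [← div_self hmin.ne', ← sub_div]
    gcongr
    exact Γ.minLen_le e
  refine (Nat.ceil_mono hle).trans_lt ?_
  rw [Nat.ceil_sub_one]
  exact Nat.sub_lt (Nat.ceil_pos.2 (div_pos ht hmin)) one_pos

/-- Let the paths that start at `v` grow until their length is at least `t`. The result is a
finite tree; `treeSum a b v t` adds up the values of `a` at the endpoints of the paths of length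
less than `t` (the inner nodes) and the values of `b` at the endpoints of the paths whose length
has just reached `t` (the leaves). -/
def treeSum {M : Type*} [AddCommMonoid M] (a b : V → M) (v : V) (t : ℝ) : M :=
  if 0 < t then a v + ∑ w, ∑ e : Γ.E v w, treeSum a b w (t - Γ.len e) else b v
termination_by ⌈t / Γ.minLen⌉₊
decreasing_by exact Γ.ceil_div_minLen_lt e ‹0 < t›

lemma tree_induction {P : V → ℝ → Prop} (nonpos : ∀ v t, t ≤ 0 → P v t)
    (pos : ∀ v t, 0 < t → (∀ w, ∀ e : Γ.E v w, P w (t - Γ.len e)) → P v t) (v : V) (t : ℝ) :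
    P v t := by
  rcases le_or_gt t 0 with ht | ht
  · exact nonpos v t ht
  · exact pos v t ht fun w e => tree_induction nonpos pos w (t - Γ.len e)
termination_by ⌈t / Γ.minLen⌉₊
decreasing_by exact Γ.ceil_div_minLen_lt e ht

section TreeSum

variable {M : Type*} [AddCommMonoid M] (a b : V → M) (v : V) {t : ℝ}

lemma treeSum_of_nonpos (ht : t ≤ 0) : Γ.treeSum a b v t = b v := by
  rw [treeSum, if_neg ht.not_gt]

lemma treeSum_of_pos (ht : 0 < t) :
    Γ.treeSum a b v t = a v + ∑ w, ∑ e : Γ.E v w, Γ.treeSum a b w (t - Γ.len e) := by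
  rw [treeSum, if_pos ht]

end TreeSum

section Counting

variable [DecidableEq V]

/-- The number of paths from `v` to `j` of length less than `t`. -/
def pathCount (j v : V) (t : ℝ) : ℝ := Γ.treeSum (Pi.single j 1) 0 v t

/-- The number of paths from `v` to `r` whose length is at least `t`, while the path without its
last edge is shorter than `t`. For `t ≤ 0` only the empty path counts. -/
def leafCount (r v : V) (t : ℝ) : ℝ := Γ.treeSum 0 (Pi.single r 1) v t

variable (j v : V) {t : ℝ}

lemma pathCount_of_nonpos (ht : t ≤ 0) : Γ.pathCount j v t = 0 :=
  Γ.treeSum_of_nonpos _ _ _ ht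

lemma pathCount_eq (t : ℝ) : Γ.pathCount j v t =
    (if v = j ∧ 0 < t then 1 else 0) + ∑ w, ∑ e : Γ.E v w, Γ.pathCount j w (t - Γ.len e) := by
  rcases le_or_gt t 0 with ht | ht
  · have hzero : ∀ w, ∀ e : Γ.E v w, Γ.pathCount j w (t - Γ.len e) = 0 := fun w e =>
      Γ.pathCount_of_nonpos j w (by linarith [Γ.len_pos e])
    simp [hzero, Γ.pathCount_of_nonpos j v ht, ht.not_gt]
  · simp [pathCount, Γ.treeSum_of_pos _ _ v ht, Pi.single_apply, ht]

lemma pathCount_nonneg (t : ℝ) : 0 ≤ Γ.pathCount j v t := by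
  induction v, t using Γ.tree_induction with
  | nonpos v t ht => rw [Γ.pathCount_of_nonpos j v ht]
  | pos v t _ ih =>
    rw [pathCount_eq]
    exact add_nonneg (by positivity)
      (Finset.sum_nonneg fun w _ => Finset.sum_nonneg fun e _ => ih w e)

lemma pathCount_mono : Monotone (Γ.pathCount j v) := by
  intro s t hst
  induction v, s using Γ.tree_induction generalizing t with
  | nonpos v s hs =>
    rw [Γ.pathCount_of_nonpos j v hs]
    exact Γ.pathCount_nonneg j v t
  | pos v s hs ih =>
    rw [Γ.pathCount_eq j v s, Γ.pathCount_eq j v t]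
    simp only [hs, hs.trans_le hst, and_true]
    gcongr with w _ e _
    exact ih w e (by linarith)

/-- The bound `exp (L + t) - 1`, unlike `exp (L + t)`, is reproduced by the renewal equation,
because at least two edges leave each vertex. -/
lemma pathCount_add_one_le (ht : -Γ.maxLen ≤ t) :
    Γ.pathCount j v t + 1 ≤ Real.exp (Γ.maxLen + t) := by
  induction v, t using Γ.tree_induction with
  | nonpos v t h =>
    rw [Γ.pathCount_of_nonpos j v h, zero_add, Real.one_le_exp_iff]
    linarith
  | pos v t h ih =>
    have hsum : ∑ w, ∑ e : Γ.E v w, (Γ.pathCount j w (t - Γ.len e) + 1) ≤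
        ∑ w, ∑ e : Γ.E v w, Γ.weight e * Real.exp (Γ.maxLen + t) := by
      gcongr with w _ e _
      refine (ih w e (by linarith [Γ.len_le_maxLen e])).trans_eq ?_
      rw [← Γ.exp_neg_len, ← Real.exp_add]
      ring_nf
    have hcard : (2 : ℝ) ≤ ∑ w, (Fintype.card (Γ.E v w) : ℝ) := mod_cast Γ.two_le_sum_card v
    simp only [← Finset.sum_mul, Γ.sum_weight, one_mul, Finset.sum_add_distrib, Finset.sum_const,
      Finset.card_univ, nsmul_eq_mul, mul_one] at hsum
    rw [pathCount_eq]
    split_ifs <;> linarith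

lemma pathCount_sub (ht : 0 < t) (l : ℝ) : Γ.pathCount j v t - Γ.pathCount j v (t - l) =
    (if v = j ∧ t ≤ l then 1 else 0) + ∑ w, ∑ f : Γ.E v w,
      (Γ.pathCount j w (t - Γ.len f) - Γ.pathCount j w (t - Γ.len f - l)) := by
  rw [Γ.pathCount_eq j v t, Γ.pathCount_eq j v (t - l)]
  simp only [Finset.sum_sub_distrib, sub_right_comm t _ l]
  by_cases hv : v = j <;> by_cases hl : l < t <;> simp [hv, hl, ht, ← not_lt]
  ring

/-- The renewal equations for the path counts up to `t` and up to `t - len e` cancel, except at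
the edges `e` leaving `v` that are at least as long as `t`. -/
lemma leafCount_eq (r : V) (t : ℝ) : Γ.leafCount r v t = (if v = r ∧ t ≤ 0 then 1 else 0) +
    ∑ h, ∑ e : Γ.E h r, (Γ.pathCount h v t - Γ.pathCount h v (t - Γ.len e)) := by
  induction v, t using Γ.tree_induction with
  | nonpos v t ht =>
    have hzero : ∀ h, ∀ e : Γ.E h r, Γ.pathCount h v (t - Γ.len e) = 0 := fun h e =>
      Γ.pathCount_of_nonpos h v (by linarith [Γ.len_pos e])
    simp [leafCount, Γ.treeSum_of_nonpos _ _ v ht, hzero, Γ.pathCount_of_nonpos _ v ht, ht,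
      Pi.single_apply]
  | pos v t ht ih =>
    have hleaf : Γ.leafCount r v t = ∑ w, ∑ f : Γ.E v w, Γ.leafCount r w (t - Γ.len f) := by
      simp only [leafCount, Γ.treeSum_of_pos _ _ v ht, Pi.zero_apply, zero_add]
    simp only [hleaf, ih, Γ.pathCount_sub _ v ht, Finset.sum_add_distrib,
      sum_sum_comm (A := fun h => Γ.E h r), sub_nonpos, ht.not_ge, and_false,
      if_false, zero_add, ite_and, Finset.sum_ite_irrel, Finset.sum_const_zero, Finset.sum_ite_eq,
      Finset.sum_ite_eq', Finset.mem_univ, if_true]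

end Counting

/-! ### Extremal limit values of asymptotically harmonic functions -/

/-- Bounded functions such that, up to a vanishing error, `F v t` is the weighted average of the
values `F w (t - len e)` over the edges `e` leaving `v`. -/
structure IsAsymptoticallyHarmonic (F : V → ℝ → ℝ) : Prop where
  bounded : ∃ B, ∀ v t, |F v t| ≤ B
  average : ∀ v, Tendsto (fun t => F v t - ∑ w, ∑ e : Γ.E v w, Γ.weight e * F w (t - Γ.len e))
    atTop (𝓝 0)

variable {Γ}

lemma tendsto_sub_atTop (p : ℝ) : Tendsto (fun t : ℝ => t - p) atTop atTop :=
  tendsto_atTop_add_const_right atTop (-p) tendsto_id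

namespace IsAsymptoticallyHarmonic

variable {F : V → ℝ → ℝ} {c : ℝ} {u : Ultrafilter ℝ} {v w : V} {p s : ℝ}

lemma neg (hF : Γ.IsAsymptoticallyHarmonic F) :
    Γ.IsAsymptoticallyHarmonic fun v t => -F v t where
  bounded := by simpa only [abs_neg] using hF.bounded
  average v := by
    simpa only [mul_neg, Finset.sum_neg_distrib, neg_zero, neg_sub, sub_neg_eq_add, neg_add_eq_sub]
      using (hF.average v).neg

lemma exists_tendsto_shift (hF : Γ.IsAsymptoticallyHarmonic F)
    (hc : ∀ w, ∀ b > c, ∀ᶠ t in atTop, F w t < b) (hu : (u : Filter ℝ) ≤ atTop) (w : V) (p : ℝ) :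
    ∃ x ≤ c, Tendsto (fun t => F w (t - p)) u (𝓝 x) := by
  obtain ⟨B, hB⟩ := hF.bounded
  obtain ⟨x, -, hx⟩ := isCompact_Icc.ultrafilter_le_nhds (u.map fun t => F w (t - p)) <|
    le_principal_iff.2 <| Filter.mem_map.2 <| univ_mem' fun t => abs_le.1 (hB w (t - p))
  refine ⟨x, le_of_forall_gt_imp_ge_of_dense fun b hb => ?_, hx⟩
  have hlt := ((tendsto_sub_atTop p).mono_left hu).eventually (hc w b hb)
  exact le_of_tendsto hx (hlt.mono fun t => le_of_lt)

/-- The limits of the averaged functions are at most `c` and their weighted average is `c`. -/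
lemma tendsto_of_edge (hF : Γ.IsAsymptoticallyHarmonic F)
    (hc : ∀ w, ∀ b > c, ∀ᶠ t in atTop, F w t < b) (hu : (u : Filter ℝ) ≤ atTop) (e : Γ.E v w)
    (h : Tendsto (fun t => F v (t - p)) u (𝓝 c)) :
    Tendsto (fun t => F w (t - (p + Γ.len e))) u (𝓝 c) := by
  choose x hxc hx using fun f : Σ w, Γ.E v w =>
    hF.exists_tendsto_shift hc hu f.1 (p + Γ.len f.2)
  have haverage : ∑ f : Σ w, Γ.E v w, Γ.weight f.2 * x f = c := by
    have herror := (hF.average v).comp ((tendsto_sub_atTop p).mono_left hu)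
    have hsum := tendsto_finsetSum Finset.univ fun f _ => (hx f).const_mul (Γ.weight f.2)
    refine tendsto_nhds_unique hsum ?_
    simpa [Function.comp_def, sub_sub, Fintype.sum_sigma] using h.sub herror
  have hsame : ∑ f : Σ w, Γ.E v w, Γ.weight f.2 * x f = ∑ f : Σ w, Γ.E v w, Γ.weight f.2 * c := by
    rw [haverage, ← Finset.sum_mul, Fintype.sum_sigma, Γ.sum_weight, one_mul]
  have hle : ∀ f ∈ Finset.univ, Γ.weight f.2 * x f ≤ Γ.weight f.2 * c := fun f _ =>
    mul_le_mul_of_nonneg_left (hxc f) (Γ.weight_pos f.2).le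
  have hxe := (Finset.sum_eq_sum_iff_of_le hle).1 hsame ⟨w, e⟩ (Finset.mem_univ _)
  rw [← mul_left_cancel₀ (Γ.weight_pos e).ne' hxe]
  exact hx ⟨w, e⟩

lemma tendsto_of_hasPath (hF : Γ.IsAsymptoticallyHarmonic F)
    (hc : ∀ w, ∀ b > c, ∀ᶠ t in atTop, F w t < b) (hu : (u : Filter ℝ) ≤ atTop)
    (hs : Γ.HasPath v w s) (h : Tendsto (fun t => F v (t - p)) u (𝓝 c)) :
    Tendsto (fun t => F w (t - (p + s))) u (𝓝 c) := by
  induction hs generalizing p with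
  | nil => simpa using h
  | cons e _ ih => simpa only [add_assoc] using ih (hF.tendsto_of_edge hc hu e h)

/-- The largest limsup `c` of an asymptotically harmonic family is, along a common ultrafilter
of times, the limit of all its members shifted back by path lengths. -/
lemma exists_extremal [Nonempty V] (hF : Γ.IsAsymptoticallyHarmonic F) :
    ∃ c : ℝ, (∀ w, ∀ b > c, ∀ᶠ t in atTop, F w t < b) ∧
      ∃ (v : V) (u : Ultrafilter ℝ), (u : Filter ℝ) ≤ atTop ∧
        ∀ w p, Γ.HasPath v w p → Tendsto (fun t => F w (t - p)) u (𝓝 c) := by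
  obtain ⟨B, hB⟩ := hF.bounded
  have hbdd : ∀ w, IsBoundedUnder (· ≤ ·) atTop (F w) := fun w =>
    isBoundedUnder_of ⟨B, fun t => (abs_le.1 (hB w t)).2⟩
  have hcobdd : ∀ w, IsCoboundedUnder (· ≤ ·) atTop (F w) := fun w =>
    (isBoundedUnder_of ⟨-B, fun t => (abs_le.1 (hB w t)).1⟩).isCoboundedUnder_le
  obtain ⟨v, hv⟩ := Finite.exists_max fun v => limsup (F v) atTop
  have hc : ∀ w, ∀ b > limsup (F v) atTop, ∀ᶠ t in atTop, F w t < b := fun w b hb =>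
    eventually_lt_of_limsup_lt ((hv w).trans_lt hb) (hbdd w)
  obtain ⟨u, hu, hlim⟩ := mapClusterPt_iff_ultrafilter.1 (MapClusterPt.limsup (hcobdd v) (hbdd v))
  refine ⟨_, hc, v, u, hu, fun w p hp => ?_⟩
  simpa using hF.tendsto_of_hasPath hc hu hp (p := 0) (by simpa using hlim)

end IsAsymptoticallyHarmonic

/-- Path lengths pin `f w` down at a set of times with small gaps, and the one-sided Lipschitz
bound controls it in between. -/
lemma HasDenseLengths.eventually_abs_sub_le (hΓ : Γ.HasDenseLengths) {f : V → ℝ → ℝ} {B : ℝ}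
    (hf : ∀ w s t, s ≤ t → f w s ≤ f w t + B * (t - s)) {v : V} {l : Filter ℝ} {c : ℝ}
    (hlim : ∀ w p, Γ.HasPath v w p → Tendsto (fun t => f w (t - p)) l (𝓝 c)) (T : ℝ) {ε : ℝ}
    (hε : 0 < ε) :
    ∃ a, ∀ᶠ t in l, ∀ w, ∀ s ∈ Set.Icc (t - a - T) (t - a), |f w s - c| ≤ ε := by
  obtain ⟨η, hη, hBη⟩ : ∃ η > 0, |B| * (3 * η) ≤ ε / 2 := by
    refine ⟨ε / (6 * (|B| + 1)), by positivity, ?_⟩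
    field_simp
    linarith
  have hf' : ∀ w s t, s ≤ t → t ≤ s + 3 * η → f w s ≤ f w t + ε / 2 := fun w s t hst hts =>
    calc f w s ≤ f w t + B * (t - s) := hf w s t hst
      _ ≤ f w t + |B| * (3 * η) := by gcongr; exacts [le_abs_self B, by linarith]
      _ ≤ f w t + ε / 2 := by gcongr
  obtain ⟨a, ha⟩ := eventually_atTop.1 (eventually_all.2 fun w => hΓ v w η hη)
  refine ⟨a + 2 * η, ?_⟩
  have hlocal : ∀ y ∈ Set.Icc (a + 2 * η) (a + 2 * η + T), ∀ᶠ z in l ×ˢ 𝓝 y,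
      ∀ w, |f w (z.1 - z.2) - c| ≤ ε := by
    refine fun y hy => eventually_all.2 fun w => ?_
    obtain ⟨p, ⟨hp, hp'⟩, hpath⟩ := ha (y + η) (by linarith [hy.1]) w
    obtain ⟨p₀, ⟨hp₀, hp₀'⟩, hpath₀⟩ := ha (y - 2 * η) (by linarith [hy.1]) w
    have hlow := (hlim w p hpath).eventually_const_lt (show c - ε / 2 < c by linarith)
    have hupp := (hlim w p₀ hpath₀).eventually_lt_const (show c < c + ε / 2 by linarith)
    filter_upwards [(hlow.and hupp).prod_mk
      (Ioo_mem_nhds (show y - η < y by linarith) (show y < y + η by linarith))]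
      with ⟨t, y'⟩ ⟨⟨hlow, hupp⟩, hy'⟩
    have h₁ := hf' w (t - p) (t - y') (by linarith [hy'.2]) (by linarith [hy'.1])
    have h₂ := hf' w (t - y') (t - p₀) (by linarith [hy'.1]) (by linarith [hy'.2])
    exact abs_le.2 ⟨by linarith, by linarith⟩
  have huniform : ∀ᶠ z in l ×ˢ 𝓝ˢ (Set.Icc (a + 2 * η) (a + 2 * η + T)),
      ∀ w, |f w (z.1 - z.2) - c| ≤ ε := isCompact_Icc.mem_prod_nhdsSet_of_forall hlocal
  filter_upwards [huniform.curry] with t ht w s hs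
  simpa using ht.self_of_nhdsSet (t - s) ⟨by linarith [hs.2], by linarith [hs.1]⟩ w

/-! ### The renewal theorem -/

lemma integral_sub_eq_integral_sub_shift {f : ℝ → ℝ} (hf : ∀ a b, IntervalIntegrable f volume a b)
    (hf₀ : ∀ s ≤ 0, f s = 0) (t : ℝ) {l : ℝ} (hl : 0 ≤ l) :
    ∫ s in (t - l)..t, f s = ∫ s in 0..t, (f s - f (s - l)) := by
  have hzero : ∫ s in (0 - l)..0, f s = 0 :=
    intervalIntegral.integral_zero_ae <| Eventually.of_forall fun s hs =>
      hf₀ s (by rw [Set.uIoc_of_le (by linarith)] at hs; exact hs.2)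
  rw [intervalIntegral.integral_sub (hf 0 t) (by simpa using (hf (0 - l) (t - l)).comp_sub_right l),
    intervalIntegral.integral_comp_sub_right f l, ← intervalIntegral.integral_add_adjacent_intervals
      (hf (0 - l) 0) (hf 0 (t - l)), hzero, zero_add]
  exact (intervalIntegral.integral_interval_sub_left (hf 0 t) (hf 0 (t - l))).symm

section ScaledCount

variable [DecidableEq V]

variable (Γ) in
/-- The path count relative to its exponential growth rate. -/
def scaledCount (j v : V) (t : ℝ) : ℝ := Real.exp (-t) * Γ.pathCount j v t

variable {j v : V} {s t : ℝ}

lemma scaledCount_of_nonpos (ht : t ≤ 0) : Γ.scaledCount j v t = 0 := by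
  rw [scaledCount, Γ.pathCount_of_nonpos j v ht, mul_zero]

lemma scaledCount_nonneg : 0 ≤ Γ.scaledCount j v t :=
  mul_nonneg (Real.exp_pos _).le (Γ.pathCount_nonneg j v t)

lemma scaledCount_le : Γ.scaledCount j v t ≤ Real.exp Γ.maxLen := by
  rcases le_or_gt t 0 with ht | ht
  · rw [scaledCount_of_nonpos ht]
    positivity
  · have hcount := Γ.pathCount_add_one_le j v (show -Γ.maxLen ≤ t by linarith [Γ.maxLen_nonneg])
    calc Γ.scaledCount j v t ≤ Real.exp (-t) * Real.exp (Γ.maxLen + t) := by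
          unfold scaledCount
          gcongr
          linarith
      _ = Real.exp Γ.maxLen := by rw [← Real.exp_add]; ring_nf

lemma scaledCount_le_add (hst : s ≤ t) :
    Γ.scaledCount j v s ≤ Γ.scaledCount j v t + Real.exp Γ.maxLen * (t - s) := by
  have hexp : 1 - (t - s) ≤ Real.exp (-(t - s)) := by linarith [Real.add_one_le_exp (-(t - s))]
  have hdecay : Real.exp (-(t - s)) * Γ.scaledCount j v s ≤ Γ.scaledCount j v t := by
    rw [scaledCount, ← mul_assoc, ← Real.exp_add, show -(t - s) + -s = -t by ring]
    exact mul_le_mul_of_nonneg_left (Γ.pathCount_mono j v hst) (Real.exp_pos _).le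
  have h₁ := mul_le_mul_of_nonneg_right hexp
    (scaledCount_nonneg (Γ := Γ) (j := j) (v := v) (t := s))
  have h₂ := mul_le_mul_of_nonneg_left (scaledCount_le (Γ := Γ) (j := j) (v := v) (t := s))
    (sub_nonneg.2 hst)
  linarith

lemma scaledCount_eq (j v : V) (t : ℝ) : Γ.scaledCount j v t =
    (if v = j ∧ 0 < t then Real.exp (-t) else 0) +
      ∑ w, ∑ e : Γ.E v w, Γ.weight e * Γ.scaledCount j w (t - Γ.len e) := by
  have hedge : ∀ w, ∀ e : Γ.E v w, Γ.weight e * Γ.scaledCount j w (t - Γ.len e) =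
      Real.exp (-t) * Γ.pathCount j w (t - Γ.len e) := fun w e => by
    rw [scaledCount, ← mul_assoc, ← Γ.exp_neg_len, ← Real.exp_add]
    ring_nf
  simp only [hedge, ← Finset.mul_sum]
  rw [scaledCount, Γ.pathCount_eq, mul_add, mul_ite, mul_one, mul_zero]

lemma isAsymptoticallyHarmonic_scaledCount (j : V) :
    Γ.IsAsymptoticallyHarmonic (Γ.scaledCount j) where
  bounded := ⟨_, fun v t => (abs_of_nonneg scaledCount_nonneg).trans_le scaledCount_le⟩
  average v := by
    have herror : ∀ t, Γ.scaledCount j v t -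
        ∑ w, ∑ e : Γ.E v w, Γ.weight e * Γ.scaledCount j w (t - Γ.len e) =
          if v = j ∧ 0 < t then Real.exp (-t) else 0 := fun t => by
      rw [scaledCount_eq, add_sub_cancel_right]
    refine squeeze_zero (fun t => ?_) (fun t => ?_) Real.tendsto_exp_neg_atTop_nhds_zero
    all_goals
      rw [herror]
      split_ifs
      all_goals first | exact le_rfl | positivity

lemma intervalIntegrable_scaledCount (j v : V) (a b : ℝ) :
    IntervalIntegrable (Γ.scaledCount j v) volume a b :=
  (Γ.pathCount_mono j v).intervalIntegrable.continuousOn_mul (by fun_prop)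

variable {q : V → ℝ}

lemma sum_weight_mul_sub_eq (hq : Matrix.vecMul q Γ.transition = q) (j : V) (hs : 0 < s) :
    ∑ v, q v * ∑ w, ∑ e : Γ.E v w,
      Γ.weight e * (Γ.scaledCount j w s - Γ.scaledCount j w (s - Γ.len e)) =
        q j * Real.exp (-s) := by
  have hstat : ∑ v, q v * ∑ w, ∑ e : Γ.E v w, Γ.weight e * Γ.scaledCount j w s =
      ∑ w, q w * Γ.scaledCount j w s := by
    conv_rhs => rw [← hq]
    simp only [Matrix.vecMul, dotProduct, transition, Matrix.of_apply, Finset.sum_mul,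
      Finset.mul_sum, mul_assoc]
    exact Finset.sum_comm
  simp only [mul_sub, Finset.sum_sub_distrib, hstat]
  rw [← Finset.sum_sub_distrib, Finset.sum_eq_single j]
  · rw [scaledCount_eq]
    simp [hs, mul_add]
  · intro v _ hv
    rw [scaledCount_eq]
    simp [hv]
  · simp

/-- Integrating the renewal equation against a stationary vector gives a conserved quantity. -/
lemma sum_weight_mul_integral_eq (hq : Matrix.vecMul q Γ.transition = q) (j : V) (ht : 0 ≤ t) :
    ∑ v, q v * ∑ w, ∑ e : Γ.E v w,
      Γ.weight e * ∫ s in (t - Γ.len e)..t, Γ.scaledCount j w s = q j * (1 - Real.exp (-t)) := by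
  have hint : ∀ w l, IntervalIntegrable
      (fun s => Γ.scaledCount j w s - Γ.scaledCount j w (s - l)) volume 0 t := fun w l =>
    (intervalIntegrable_scaledCount j w 0 t).sub <| by
      simpa using (intervalIntegrable_scaledCount j w (0 - l) (t - l)).comp_sub_right l
  have hwindow : ∀ v w, ∀ e : Γ.E v w, ∫ s in (t - Γ.len e)..t, Γ.scaledCount j w s =
      ∫ s in 0..t, (Γ.scaledCount j w s - Γ.scaledCount j w (s - Γ.len e)) := fun v w e =>
    integral_sub_eq_integral_sub_shift (intervalIntegrable_scaledCount j w)
      (fun s => scaledCount_of_nonpos) t (Γ.len_pos e).le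
  have hswap : ∫ s in 0..t, ∑ v, q v * ∑ w, ∑ e : Γ.E v w,
        Γ.weight e * (Γ.scaledCount j w s - Γ.scaledCount j w (s - Γ.len e)) =
      ∑ v, q v * ∑ w, ∑ e : Γ.E v w, Γ.weight e *
        ∫ s in 0..t, (Γ.scaledCount j w s - Γ.scaledCount j w (s - Γ.len e)) := by
    have hsigma : ∀ F : ∀ v w, Γ.E v w → ℝ,
        ∑ v, ∑ w, ∑ e, F v w e = ∑ x : Σ v w, Γ.E v w, F x.1 x.2.1 x.2.2 := fun F => by
      simp only [Fintype.sum_sigma]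
    simp only [Finset.mul_sum, hsigma]
    rw [intervalIntegral.integral_finsetSum fun x _ =>
      ((hint x.2.1 (Γ.len x.2.2)).const_mul (Γ.weight x.2.2)).const_mul (q x.1)]
    simp only [intervalIntegral.integral_const_mul]
  simp only [hwindow]
  rw [← hswap, intervalIntegral.integral_congr_ae (g := fun s => q j * Real.exp (-s))]
  · simp
  · refine Eventually.of_forall fun s hs => sum_weight_mul_sub_eq hq j ?_
    rw [Set.uIoc_of_le ht] at hs
    exact hs.1

lemma abs_integral_scaledCount_sub_le {c ε l : ℝ} (hl : 0 ≤ l)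
    (hwin : ∀ s ∈ Set.Icc (t - l) t, |Γ.scaledCount j v s - c| ≤ ε) :
    |(∫ s in (t - l)..t, Γ.scaledCount j v s) - c * l| ≤ ε * l := by
  have hconst : ∫ _s in (t - l)..t, c = c * l := by simp [mul_comm]
  rw [← hconst, ← intervalIntegral.integral_sub (intervalIntegrable_scaledCount j v _ _)
    intervalIntegrable_const, ← Real.norm_eq_abs]
  refine (intervalIntegral.norm_integral_le_of_norm_le_const (C := ε) fun s hs => ?_).trans_eq
    (by simp [abs_of_nonneg hl])
  rw [Set.uIoc_of_le (by linarith)] at hs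
  exact hwin s ⟨hs.1.le, hs.2⟩

lemma abs_sub_mul_meanLen_le (hq : Matrix.vecMul q Γ.transition = q) (hq₀ : ∀ v, 0 ≤ q v)
    (ht : 0 ≤ t) {c ε : ℝ}
    (hwin : ∀ w, ∀ s ∈ Set.Icc (t - Γ.maxLen) t, |Γ.scaledCount j w s - c| ≤ ε) :
    |q j * (1 - Real.exp (-t)) - c * Γ.meanLen q| ≤ ε * Γ.meanLen q := by
  have hedge : ∀ v w, ∀ e : Γ.E v w,
      |(∫ s in (t - Γ.len e)..t, Γ.scaledCount j w s) - c * Γ.len e| ≤ ε * Γ.len e := fun v w e =>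
    abs_integral_scaledCount_sub_le (Γ.len_pos e).le fun s hs =>
      hwin w s ⟨by linarith [hs.1, Γ.len_le_maxLen e], hs.2⟩
  calc |q j * (1 - Real.exp (-t)) - c * Γ.meanLen q|
      = |∑ v, q v * ∑ w, ∑ e : Γ.E v w,
          Γ.weight e * ((∫ s in (t - Γ.len e)..t, Γ.scaledCount j w s) - c * Γ.len e)| := by
        rw [← sum_weight_mul_integral_eq hq j ht]
        simp only [meanLen, mul_sub, Finset.sum_sub_distrib, Finset.mul_sum]
        ring_nf
    _ ≤ ∑ v, q v * ∑ w, ∑ e : Γ.E v w, Γ.weight e * (ε * Γ.len e) := by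
        refine (Finset.abs_sum_le_sum_abs _ _).trans (Finset.sum_le_sum fun v _ => ?_)
        rw [abs_mul, abs_of_nonneg (hq₀ v)]
        refine mul_le_mul_of_nonneg_left ?_ (hq₀ v)
        refine (Finset.abs_sum_le_sum_abs _ _).trans (Finset.sum_le_sum fun w _ => ?_)
        refine (Finset.abs_sum_le_sum_abs _ _).trans (Finset.sum_le_sum fun e _ => ?_)
        rw [abs_mul, abs_of_pos (Γ.weight_pos e)]
        exact mul_le_mul_of_nonneg_left (hedge v w e) (Γ.weight_pos e).le
    _ = ε * Γ.meanLen q := by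
        simp only [meanLen, Finset.mul_sum, mul_left_comm ε]

/-- The conserved quantity determines every value that the path counts approach uniformly on long
windows. -/
lemma mul_meanLen_eq (hΓ : Γ.HasDenseLengths) (hq : Matrix.vecMul q Γ.transition = q)
    (hq₀ : ∀ v, 0 ≤ q v) {l : Filter ℝ} [l.NeBot] (hl : l ≤ atTop) {c : ℝ}
    (hlim : ∀ w p, Γ.HasPath v w p → Tendsto (fun t => Γ.scaledCount j w (t - p)) l (𝓝 c)) :
    c * Γ.meanLen q = q j := by
  have hbound : ∀ ε > 0, |q j - c * Γ.meanLen q| ≤ ε * Γ.meanLen q := fun ε hε => by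
    obtain ⟨a, ha⟩ := hΓ.eventually_abs_sub_le (f := Γ.scaledCount j)
      (fun w s t => scaledCount_le_add) hlim Γ.maxLen hε
    have hshift := (tendsto_sub_atTop a).mono_left hl
    have hexp : Tendsto (fun t => |q j * (1 - Real.exp (-(t - a))) - c * Γ.meanLen q|) l
        (𝓝 |q j * (1 - 0) - c * Γ.meanLen q|) :=
      ((((Real.tendsto_exp_neg_atTop_nhds_zero.comp hshift).const_sub 1).const_mul _).sub_const
        _).abs
    rw [sub_zero, mul_one] at hexp
    refine le_of_tendsto hexp ?_
    filter_upwards [ha, hshift.eventually_ge_atTop 0] with t hwin ht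
    exact abs_sub_mul_meanLen_le hq hq₀ ht hwin
  have hsmall : Tendsto (fun ε => ε * Γ.meanLen q) (𝓝[>] 0) (𝓝 0) := by
    simpa using ((continuous_mul_const (Γ.meanLen q)).tendsto 0).mono_left nhdsWithin_le_nhds
  have hzero := ge_of_tendsto hsmall (eventually_nhdsWithin_of_forall hbound)
  linarith [abs_nonpos_iff.1 hzero]

/-- The **renewal theorem**: the conserved quantity determines both the largest limsup and the
smallest liminf of the path counts. -/
theorem tendsto_scaledCount [Nonempty V] (hΓ : Γ.HasDenseLengths)
    (hq : Matrix.vecMul q Γ.transition = q) (hq₀ : ∀ v, 0 < q v) (j v : V) :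
    Tendsto (Γ.scaledCount j v) atTop (𝓝 (q j / Γ.meanLen q)) := by
  have hharm := Γ.isAsymptoticallyHarmonic_scaledCount j
  obtain ⟨c, hc, x, u, hu, hlim⟩ := hharm.exists_extremal
  obtain ⟨c', hc', x', u', hu', hlim'⟩ := hharm.neg.exists_extremal
  have hmean := (Γ.meanLen_pos hq₀).ne'
  have hcq := mul_meanLen_eq hΓ hq (fun v => (hq₀ v).le) hu hlim
  have hcq' := mul_meanLen_eq hΓ hq (fun v => (hq₀ v).le) hu'
    fun w p hp => by simpa only [neg_neg] using (hlim' w p hp).neg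
  rw [← eq_div_iff hmean] at hcq hcq'
  refine tendsto_order.2 ⟨fun b hb => ?_, fun b hb => hc v b (hcq ▸ hb)⟩
  filter_upwards [hc' v (-b) (by linarith)] with t ht
  linarith

end ScaledCount

/-! ### Leaf frequencies -/

section LeafFrequency

variable [DecidableEq V] {q : V → ℝ}

lemma tendsto_exp_neg_mul_leafCount [Nonempty V] (hΓ : Γ.HasDenseLengths)
    (hq : Matrix.vecMul q Γ.transition = q) (hq₀ : ∀ v, 0 < q v) (r v : V) :
    Tendsto (fun t => Real.exp (-t) * Γ.leafCount r v t) atTop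
      (𝓝 ((∑ h, q h * ∑ e : Γ.E h r, (1 - Γ.weight e)) / Γ.meanLen q)) := by
  have hscaled : ∀ᶠ t in atTop, ∑ h, ∑ e : Γ.E h r,
      (Γ.scaledCount h v t - Γ.weight e * Γ.scaledCount h v (t - Γ.len e)) =
        Real.exp (-t) * Γ.leafCount r v t := by
    filter_upwards [eventually_gt_atTop 0] with t ht
    simp only [Γ.leafCount_eq, ht.not_ge, and_false, if_false, zero_add, Finset.mul_sum]
    congr! 2 with h _ e
    rw [scaledCount, scaledCount, ← mul_assoc, ← Γ.exp_neg_len, ← Real.exp_add]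
    ring_nf
  refine Tendsto.congr' hscaled ?_
  have hlim := fun h => tendsto_scaledCount hΓ hq hq₀ h v
  have hsum := tendsto_finsetSum Finset.univ fun h _ => tendsto_finsetSum Finset.univ
    fun (e : Γ.E h r) _ => (hlim h).sub (((hlim h).comp (tendsto_sub_atTop (Γ.len e))).const_mul
      (Γ.weight e))
  have hvalue : ∑ h, ∑ e : Γ.E h r, (q h / Γ.meanLen q - Γ.weight e * (q h / Γ.meanLen q)) =
      (∑ h, q h * ∑ e : Γ.E h r, (1 - Γ.weight e)) / Γ.meanLen q := by
    simp only [Finset.sum_div, Finset.mul_sum]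
    congr! 2
    ring
  exact hvalue ▸ hsum

theorem tendsto_leafCount_div_sum [Nonempty V] (hΓ : Γ.HasDenseLengths)
    (hq : Matrix.vecMul q Γ.transition = q) (hq₀ : ∀ v, 0 < q v) (r v : V) :
    Tendsto (fun t => Γ.leafCount r v t / ∑ j, Γ.leafCount j v t) atTop
      (𝓝 ((∑ h, q h * ∑ e : Γ.E h r, (1 - Γ.weight e)) /
        ∑ h, ∑ j, q h * ∑ e : Γ.E h j, (1 - Γ.weight e))) := by
  have hlim := fun j => tendsto_exp_neg_mul_leafCount hΓ hq hq₀ j v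
  have htotal : 0 < ∑ h, ∑ j, q h * ∑ e : Γ.E h j, (1 - Γ.weight e) := by
    refine Finset.sum_pos (fun h _ => ?_) Finset.univ_nonempty
    have := Γ.nonempty_edges h
    rw [← Finset.mul_sum, ← Fintype.sum_sigma']
    exact mul_pos (hq₀ h) (Finset.sum_pos (fun e _ => sub_pos.2 (Γ.weight_lt_one e.2))
      Finset.univ_nonempty)
  rw [Finset.sum_comm] at htotal ⊢
  have hmean := (Γ.meanLen_pos hq₀).ne'
  have hdiv := (hlim r).div (tendsto_finsetSum Finset.univ fun j _ => hlim j) <| by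
    rw [← Finset.sum_div]
    exact div_ne_zero htotal.ne' hmean
  rw [← Finset.sum_div, div_div_div_cancel_right₀ hmean] at hdiv
  refine hdiv.congr fun t => ?_
  rw [Pi.div_apply, ← Finset.mul_sum, mul_div_mul_left _ _ (Real.exp_pos _).ne']

end LeafFrequency

end StochasticMultigraph

/-! ### The adjugate of `1 - M` for an irreducible stochastic matrix `M` -/

section Stochastic

variable {ι : Type*} [Fintype ι] [DecidableEq ι] {M : Matrix ι ι ℝ}

/-- The maximum principle: the maximal modulus propagates along the edges of `M` to `j`. -/
lemma eq_zero_of_eq_mul_mulVec (hM : M ∈ Matrix.rowStochastic ℝ ι) (hirr : M.IsIrreducible)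
    {s : ℝ} (hs₀ : 0 ≤ s) (hs₁ : s ≤ 1) {j : ι} {v : ι → ℝ} (hj : v j = 0)
    (hv : ∀ i ≠ j, v i = s * (M.mulVec v) i) : v = 0 := by
  have : Nonempty ι := ⟨j⟩
  obtain ⟨m, hm⟩ := Finite.exists_max fun i => |v i|
  have hstep : ∀ a b, |v a| = |v m| → 0 < M a b → |v b| = |v m| := by
    intro a b ha hab
    rcases eq_or_ne a j with rfl | haj
    · exact (hm b).antisymm (by simp [← ha, hj])
    have hle : ∀ h ∈ Finset.univ, M a h * |v h| ≤ M a h * |v m| := fun h _ =>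
      mul_le_mul_of_nonneg_left (hm h) (hirr.nonneg a h)
    have hsum : ∑ h, M a h * |v h| = ∑ h, M a h * |v m| := by
      refine (Finset.sum_le_sum hle).antisymm ?_
      calc ∑ h, M a h * |v m| = |v a| := by
            rw [← Finset.sum_mul, Matrix.sum_row_of_mem_rowStochastic hM, one_mul, ha]
        _ = s * |(M.mulVec v) a| := by rw [hv a haj, abs_mul, abs_of_nonneg hs₀]
        _ ≤ |∑ h, M a h * v h| := mul_le_of_le_one_left (abs_nonneg _) hs₁
        _ ≤ ∑ h, |M a h * v h| := Finset.abs_sum_le_sum_abs _ _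
        _ = ∑ h, M a h * |v h| := by simp only [abs_mul, abs_of_nonneg (hirr.nonneg a _)]
    exact mul_left_cancel₀ hab.ne'
      ((Finset.sum_eq_sum_iff_of_le hle).1 hsum b (Finset.mem_univ b))
  let := M.toQuiver
  have hpath : ∀ w, Quiver.Path m w → |v w| = |v m| := fun w p => by
    induction p with
    | nil => rfl
    | cons _ e ih => exact hstep _ _ ih e.down
  obtain ⟨p, -⟩ := hirr.connected m j
  ext i
  exact abs_nonpos_iff.1 ((hm i).trans_eq (by rw [← hpath j p, hj, abs_zero]))

/-- The cofactor is the value at `s = 1` of that of `1 - s M`, which is `1` at `s = 0` and has no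
zero for `s ∈ [0, 1]`. -/
lemma adjugate_one_sub_apply_self_pos (hM : M ∈ Matrix.rowStochastic ℝ ι) (hirr : M.IsIrreducible)
    (j : ι) : 0 < (1 - M).adjugate j j := by
  have hcont : Continuous fun s : ℝ => (1 - s • M).adjugate j j := by fun_prop
  have hne : ∀ s ∈ Set.Icc (0 : ℝ) 1, (1 - s • M).adjugate j j ≠ 0 := by
    intro s hs hzero
    rw [Matrix.adjugate_apply] at hzero
    obtain ⟨v, hv₀, hv⟩ := Matrix.exists_mulVec_eq_zero_iff.2 hzero
    refine hv₀ (eq_zero_of_eq_mul_mulVec hM hirr hs.1 hs.2 (j := j) ?_ fun i hi => ?_)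
    · simpa [Matrix.mulVec] using congrFun hv j
    · have hrow : ((1 - s • M).mulVec v) i = 0 := by
        simpa only [Matrix.mulVec, Matrix.updateRow_ne hi, Pi.zero_apply] using congrFun hv i
      rwa [Matrix.sub_mulVec, Matrix.one_mulVec, Matrix.smul_mulVec, Pi.sub_apply, Pi.smul_apply,
        smul_eq_mul, sub_eq_zero] at hrow
  by_contra! hneg
  obtain ⟨s, hs, hs₀⟩ := intermediate_value_Icc' zero_le_one hcont.continuousOn
    (show (0 : ℝ) ∈ Set.Icc _ _ from ⟨by simpa using hneg, by simp⟩)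
  exact hne s hs hs₀

lemma det_one_sub_eq_zero [Nonempty ι] (hM : M ∈ Matrix.rowStochastic ℝ ι) : (1 - M).det = 0 :=
  Matrix.exists_mulVec_eq_zero_iff.1 ⟨1, one_ne_zero, by
    rw [Matrix.sub_mulVec, Matrix.one_mulVec, Matrix.one_vecMul_of_mem_rowStochastic hM, sub_self]⟩

lemma adjugate_one_sub_mul [Nonempty ι] (hM : M ∈ Matrix.rowStochastic ℝ ι) :
    (1 - M).adjugate * M = (1 - M).adjugate := by
  have hzero := (1 - M).adjugate_mul
  rw [det_one_sub_eq_zero hM, zero_smul, mul_sub, mul_one, sub_eq_zero] at hzero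
  exact hzero.symm

lemma mul_adjugate_one_sub [Nonempty ι] (hM : M ∈ Matrix.rowStochastic ℝ ι) :
    M * (1 - M).adjugate = (1 - M).adjugate := by
  have hzero := (1 - M).mul_adjugate
  rw [det_one_sub_eq_zero hM, zero_smul, sub_mul, one_mul, sub_eq_zero] at hzero
  exact hzero.symm

lemma adjugate_one_sub_rows_eq (hM : M ∈ Matrix.rowStochastic ℝ ι) (hirr : M.IsIrreducible)
    (a b c : ι) : (1 - M).adjugate a c = (1 - M).adjugate b c := by
  have : Nonempty ι := ⟨a⟩
  have hcol : M.mulVec ((1 - M).adjugate.col c) = (1 - M).adjugate.col c :=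
    funext fun i => congrFun (congrFun (mul_adjugate_one_sub hM) i) c
  have hzero := eq_zero_of_eq_mul_mulVec hM hirr zero_le_one le_rfl (j := b)
    (v := (1 - M).adjugate.col c - (1 - M).adjugate b c • 1) (by simp) fun i _ => by
      rw [Matrix.mulVec_sub, hcol, Matrix.mulVec_smul,
        Matrix.one_vecMul_of_mem_rowStochastic hM, one_mul]
  simpa [sub_eq_zero] using congrFun hzero a

lemma adjugate_one_sub_pos (hM : M ∈ Matrix.rowStochastic ℝ ι) (hirr : M.IsIrreducible)
    (a b : ι) : 0 < (1 - M).adjugate a b := by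
  rw [adjugate_one_sub_rows_eq hM hirr a b]
  exact adjugate_one_sub_apply_self_pos hM hirr b

end Stochastic

/-! ### Tiles and partitions -/

section Tiles

variable {d n : ℕ} {a : ℝ} {X Y : Set (Euc d)}

lemma volume_similar (ha : 0 < a) (φ : Euc d ≃ᵢ Euc d) (X : Set (Euc d)) :
    volume (φ '' (a • X)) = ENNReal.ofReal (a ^ d) * volume X := by
  rw [← EuclideanSpace.euclideanHausdorffMeasure_eq_volume d,
    φ.isometry.euclideanHausdorffMeasure_image,
    EuclideanSpace.euclideanHausdorffMeasure_eq_volume d, Measure.addHaar_smul,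
    finrank_euclideanSpace_fin, abs_of_pos (pow_pos ha d)]

lemma interior_similar (ha : a ≠ 0) (φ : Euc d ≃ᵢ Euc d) (X : Set (Euc d)) :
    interior (φ '' (a • X)) = φ '' (a • interior X) := by
  rw [← interior_smul₀ ha]
  exact (φ.toHomeomorph.image_interior _).symm

lemma frontier_similar (ha : a ≠ 0) (φ : Euc d ≃ᵢ Euc d) (X : Set (Euc d)) :
    frontier (φ '' (a • X)) = φ '' (a • frontier X) := by
  have hsmul : a • frontier X = frontier (a • X) := (Homeomorph.smulOfNeZero a ha).image_frontier X
  rw [hsmul]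
  exact (φ.toHomeomorph.image_frontier _).symm

lemma disjoint_interior_similar (ha : a ≠ 0) (φ : Euc d ≃ᵢ Euc d)
    (h : Disjoint (interior X) (interior Y)) :
    Disjoint (interior (φ '' (a • X))) (interior (φ '' (a • Y))) := by
  rw [interior_similar ha, interior_similar ha]
  exact (Set.disjoint_image_iff φ.injective).2
    ((Set.disjoint_image_iff (smul_right_injective _ ha)).2 h)

namespace IsTile

lemma similar (hX : IsTile X) (ha : 0 < a) (φ : Euc d ≃ᵢ Euc d) : IsTile (φ '' (a • X)) := by
  obtain ⟨hbdd, -, hpos, hfrontier⟩ := hX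
  have hnull : volume (frontier (φ '' (a • X))) = 0 := by
    rw [frontier_similar ha.ne', volume_similar ha, hfrontier, mul_zero]
  refine ⟨φ.isometry.lipschitz.isBounded_image (hbdd.smul₀ a),
    nullMeasurableSet_of_null_frontier hnull, ?_,
    hnull⟩
  rw [volume_similar ha]
  exact ENNReal.mul_pos (by positivity) hpos.ne'

lemma toReal_volume_pos (hX : IsTile X) : 0 < (volume X).toReal :=
  ENNReal.toReal_pos hX.2.2.1.ne' hX.1.measure_lt_top.ne

lemma nonempty (hX : IsTile X) : X.Nonempty := nonempty_of_measure_ne_zero hX.2.2.1.ne'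

lemma interior_nonempty (hX : IsTile X) : (interior X).Nonempty :=
  nonempty_of_measure_ne_zero (μ := volume) <| by
    rw [measure_congr (interior_ae_eq_of_null_frontier hX.2.2.2)]
    exact hX.2.2.1.ne'

end IsTile

/-- The volume of a labeled tile, as a real number. -/
def LTile.vol (S : LTile d n) : ℝ := (volume S.carrier).toReal

/-- A partition of `U`: finitely many tiles with disjoint interiors whose union is `U`. -/
structure IsPartition (U : Set (Euc d)) (P : Finset (LTile d n)) : Prop where
  isTile : ∀ S ∈ P, IsTile S.carrier
  disjoint : (P : Set (LTile d n)).PairwiseDisjoint fun S => interior S.carrier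
  iUnion_eq : ⋃ S ∈ P, S.carrier = U

namespace IsPartition

variable {U : Set (Euc d)} {P : Finset (LTile d n)} {R : LTile d n → Finset (LTile d n)}
  {S : LTile d n}

lemma vol_pos (hP : IsPartition U P) (hS : S ∈ P) : 0 < S.vol := (hP.isTile S hS).toReal_volume_pos

lemma subset (hP : IsPartition U P) (hS : S ∈ P) : S.carrier ⊆ U :=
  hP.iUnion_eq ▸ Set.subset_biUnion_of_mem (u := LTile.carrier) hS

lemma nonempty (hP : IsPartition U P) (hU : U.Nonempty) : P.Nonempty := by
  obtain ⟨x, hx⟩ := hU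
  rw [← hP.iUnion_eq, Set.mem_iUnion₂] at hx
  obtain ⟨S, hS, -⟩ := hx
  exact ⟨S, hS⟩

lemma singleton (hS : IsTile S.carrier) : IsPartition S.carrier {S} where
  isTile := by simpa using hS
  disjoint := by simp
  iUnion_eq := by simp

lemma sum_vol (hP : IsPartition U P) : ∑ S ∈ P, S.vol = (volume U).toReal := by
  have hae : ∀ S ∈ P, interior S.carrier =ᵐ[volume] S.carrier := fun S hS =>
    interior_ae_eq_of_null_frontier (hP.isTile S hS).2.2.2
  have hdisj : (P : Set (LTile d n)).Pairwise
      (Function.onFun (AEDisjoint volume) LTile.carrier) := fun S hS S' hS' hne =>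
    (hP.disjoint hS hS' hne).aedisjoint.congr (hae S hS).symm (hae S' hS').symm
  rw [← hP.iUnion_eq, measure_biUnion_finset₀ hdisj fun S hS => (hP.isTile S hS).2.1,
    ENNReal.toReal_sum fun S hS => (hP.isTile S hS).1.measure_lt_top.ne]
  rfl

lemma disjoint_interior (hP : IsPartition U P) (hR : ∀ S ∈ P, IsPartition S.carrier (R S))
    {S S' Z Z' : LTile d n} (hS : S ∈ P) (hS' : S' ∈ P) (hne : S ≠ S') (hZ : Z ∈ R S)
    (hZ' : Z' ∈ R S') : Disjoint (interior Z.carrier) (interior Z'.carrier) :=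
  (hP.disjoint hS hS' hne).mono (interior_mono ((hR S hS).subset hZ))
    (interior_mono ((hR S' hS').subset hZ'))

lemma pairwiseDisjoint (hP : IsPartition U P) (hR : ∀ S ∈ P, IsPartition S.carrier (R S)) :
    (P : Set (LTile d n)).PairwiseDisjoint R := fun S hS _ hS' hne =>
  Finset.disjoint_left.2 fun Z hZ hZ' => ((hR S hS).isTile Z hZ).interior_nonempty.ne_empty <|
    disjoint_self.1 (hP.disjoint_interior hR hS hS' hne hZ hZ')

lemma biUnion (hP : IsPartition U P) (hR : ∀ S ∈ P, IsPartition S.carrier (R S)) :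
    IsPartition U (P.biUnion R) where
  isTile Z hZ := by
    obtain ⟨S, hS, hZ⟩ := Finset.mem_biUnion.1 hZ
    exact (hR S hS).isTile Z hZ
  disjoint Z hZ Z' hZ' hne := by
    obtain ⟨S, hS, hZ⟩ := Finset.mem_biUnion.1 hZ
    obtain ⟨S', hS', hZ'⟩ := Finset.mem_biUnion.1 hZ'
    rcases eq_or_ne S S' with rfl | hSS'
    · exact (hR S hS).disjoint hZ hZ' hne
    · exact hP.disjoint_interior hR hS hS' hSS' hZ hZ'
  iUnion_eq := by
    rw [Finset.set_biUnion_biUnion, ← hP.iUnion_eq]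
    exact Set.iUnion₂_congr fun S hS => (hR S hS).iUnion_eq

end IsPartition

/-! ### Substitution -/

variable {σ : MSScheme d n}

namespace MSScheme

lemma beta_pow_mul_volume (σ : MSScheme d n) (hd : d ≠ 0) (i j : Fin n) (k : Fin (σ.numSub i j)) :
    σ.beta i j k ^ d * (volume (σ.T i)).toReal = σ.scale i j k ^ d * (volume (σ.T j)).toReal := by
  have hi := (σ.tile i).toReal_volume_pos
  have hj := (σ.tile j).toReal_volume_pos
  rw [beta, mul_pow, one_div, Real.rpow_inv_natCast_pow (by positivity) hd]
  field_simp

lemma beta_pow_pos (i j : Fin n) (k : Fin (σ.numSub i j)) : 0 < σ.beta i j k ^ d :=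
  pow_pos (σ.beta_pos i j k) d

lemma beta_pow_lt_one (hd : d ≠ 0) (i j : Fin n) (k : Fin (σ.numSub i j)) :
    σ.beta i j k ^ d < 1 :=
  pow_lt_one₀ (σ.beta_pos i j k).le (σ.beta_lt_one i j k) hd

variable {ϱ : (i j : Fin n) → Fin (σ.numSub i j) → Set (Euc d)}

lemma isTile_rule (hϱ : ϱ ∈ σ.rules) (i j : Fin n) (k : Fin (σ.numSub i j)) :
    IsTile (ϱ i j k) := by
  obtain ⟨φ, hφ⟩ := σ.rules_iso ϱ hϱ i j k
  rw [hφ]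
  exact (σ.tile j).similar (σ.scale_pos i j k) φ

lemma toReal_volume_rule (hd : d ≠ 0) (hϱ : ϱ ∈ σ.rules) (i j : Fin n)
    (k : Fin (σ.numSub i j)) :
    (volume (ϱ i j k)).toReal = σ.beta i j k ^ d * (volume (σ.T i)).toReal := by
  obtain ⟨φ, hφ⟩ := σ.rules_iso ϱ hϱ i j k
  have hα := σ.scale_pos i j k
  rw [hφ, volume_similar hα, ENNReal.toReal_mul, ENNReal.toReal_ofReal (by positivity),
    σ.beta_pow_mul_volume hd]

end MSScheme

namespace SubstitutesTo

variable {S : LTile d n} {P : Finset (LTile d n)}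

lemma isPartition (h : SubstitutesTo σ S P) : IsPartition S.carrier P := by
  obtain ⟨ϱ, hϱ, a, ha, φ, hS, rfl⟩ := h
  refine ⟨fun Z hZ => ?_, fun Z hZ Z' hZ' hne => ?_, ?_⟩
  · obtain ⟨p, -, rfl⟩ := Finset.mem_image.1 hZ
    exact (MSScheme.isTile_rule hϱ S.type p.1 p.2).similar ha φ
  · obtain ⟨p, -, rfl⟩ := Finset.mem_image.1 hZ
    obtain ⟨p', -, rfl⟩ := Finset.mem_image.1 hZ'
    exact disjoint_interior_similar ha.ne' φ
      (σ.rules_disjoint ϱ hϱ S.type p p' fun h => hne (by rw [h]))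
  · simp only [Finset.mem_image, Finset.mem_univ, true_and, Set.iUnion_exists,
      Set.iUnion_iUnion_eq']
    rw [hS, ← σ.rules_cover ϱ hϱ S.type, Set.smul_set_iUnion, Set.image_iUnion]

lemma exists_injective_param (hd : d ≠ 0) (h : SubstitutesTo σ S P) :
    ∃ c : (Σ j, Fin (σ.numSub S.type j)) → LTile d n,
      Function.Injective c ∧ P = Finset.univ.image c ∧
        ∀ p, (c p).type = p.1 ∧ (c p).vol = σ.beta S.type p.1 p.2 ^ d * S.vol := by
  obtain ⟨ϱ, hϱ, a, ha, φ, hS, rfl⟩ := h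
  refine ⟨_, fun p p' hpp' => ?_, rfl, fun p => ⟨rfl, ?_⟩⟩
  · by_contra hne
    have hdisj := disjoint_interior_similar ha.ne' φ (σ.rules_disjoint ϱ hϱ S.type p p' hne)
    rw [← (LTile.mk.inj hpp').1, disjoint_self] at hdisj
    exact ((MSScheme.isTile_rule hϱ _ _ _).similar ha φ).interior_nonempty.ne_empty hdisj
  · rw [LTile.vol, LTile.vol, hS, volume_similar ha, volume_similar ha, ENNReal.toReal_mul,
      ENNReal.toReal_mul, MSScheme.toReal_volume_rule hd hϱ, mul_left_comm]

lemma sum_eq {M : Type*} [AddCommMonoid M] (hd : d ≠ 0) (h : SubstitutesTo σ S P)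
    (f : Fin n → ℝ → M) :
    ∑ Z ∈ P, f Z.type Z.vol =
      ∑ j, ∑ k : Fin (σ.numSub S.type j), f j (σ.beta S.type j k ^ d * S.vol) := by
  obtain ⟨c, hinj, rfl, hc⟩ := h.exists_injective_param hd
  rw [Finset.sum_image hinj.injOn, ← Fintype.sum_sigma']
  simp only [hc]

lemma vol_lt (hd : d ≠ 0) (h : SubstitutesTo σ S P) {Z : LTile d n} (hZ : Z ∈ P)
    (hS : 0 < S.vol) : Z.vol < S.vol := by
  obtain ⟨c, -, rfl, hc⟩ := h.exists_injective_param hd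
  obtain ⟨p, -, rfl⟩ := Finset.mem_image.1 hZ
  rw [(hc p).2]
  exact mul_lt_of_lt_one_left hS (MSScheme.beta_pow_lt_one hd _ _ _)

end SubstitutesTo

lemma MSScheme.exists_substitutesTo (σ : MSScheme d n) (i : Fin n) :
    ∃ P, SubstitutesTo σ ⟨σ.T i, i⟩ P := by
  obtain ⟨ϱ, hϱ⟩ := σ.rules_nonempty
  exact ⟨_, ϱ, hϱ, 1, one_pos, .refl _, by
    rw [one_smul]
    exact (Set.image_id _).symm, rfl⟩

lemma MSScheme.sum_beta_pow (σ : MSScheme d n) (hd : d ≠ 0) (i : Fin n) :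
    ∑ j, ∑ k : Fin (σ.numSub i j), σ.beta i j k ^ d = 1 := by
  obtain ⟨P, hP⟩ := σ.exists_substitutesTo i
  have hsum := (hP.sum_eq hd fun _ v => v).symm.trans hP.isPartition.sum_vol
  simp only [← Finset.sum_mul] at hsum
  exact (mul_eq_right₀ (σ.tile i).toReal_volume_pos.ne').1 hsum

end Tiles

/-! ### The graph of a substitution scheme -/

namespace MSScheme

section Graph

variable {d n : ℕ} (σ : MSScheme d n) (hd : d ≠ 0)

/-- The graph of a scheme, used to count tiles: the vertices are the types, and each substitution
tile of type `j` in `T i` is an edge from `i` to `j`, weighted by its relative volume. -/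
def graph : StochasticMultigraph (Fin n) where
  E i j := Fin (σ.numSub i j)
  fintypeE _ _ := inferInstance
  weight {i j} k := σ.beta i j k ^ d
  weight_pos k := beta_pow_pos _ _ k
  weight_lt_one k := beta_pow_lt_one hd _ _ k
  sum_weight := σ.sum_beta_pow hd

variable {σ}

/-- In dimension `0` the volume ratio `β ^ 0 = 1` of every tile has logarithm `0`. -/
lemma Incommensurable.dim_ne_zero (hinc : σ.Incommensurable) : d ≠ 0 := by
  rintro rfl
  obtain ⟨i, j, a, b, ⟨m, -, p, -, -, e, rfl⟩, -, hab⟩ := hinc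
  exact hab 0 (by simp)

lemma Irreducible.exists_hasPath (hirr : σ.Irreducible) (i j : Fin n) :
    ∃ s, (σ.graph hd).HasPath i j s := by
  have hstep : ∀ {a b}, 0 < σ.numSub a b → ∃ s, (σ.graph hd).HasPath a b s := fun hab =>
    ⟨_, .cons (Γ := σ.graph hd) ⟨0, hab⟩ (.nil _)⟩
  induction hirr i j with
  | single h => exact hstep h
  | tail _ h ih =>
    obtain ⟨s, hs⟩ := ih
    obtain ⟨t, ht⟩ := hstep h
    exact ⟨_, hs.trans ht⟩

lemma hasPath_sum_len {m : ℕ} (p : Fin (m + 1) → Fin n)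
    (e : ∀ t : Fin m, (σ.graph hd).E (p t.castSucc) (p t.succ)) :
    (σ.graph hd).HasPath (p 0) (p (Fin.last m)) (∑ t, (σ.graph hd).len (e t)) := by
  induction m with
  | zero => simpa using StochasticMultigraph.HasPath.nil (Γ := σ.graph hd) (p 0)
  | succ m ih =>
    rw [Fin.sum_univ_succ]
    exact .cons (e 0) (ih (fun t => p t.succ) fun t => e t.succ)

lemma IsClosedPathLogVol.hasPath {i : Fin n} {a : ℝ} (h : σ.IsClosedPathLogVol i a) :
    (σ.graph hd).HasPath i i (-a) := by
  obtain ⟨m, -, p, hfirst, hlast, e, rfl⟩ := h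
  have hpath := hasPath_sum_len hd p e
  rw [hfirst, hlast] at hpath
  rw [← Finset.sum_neg_distrib]
  exact hpath

lemma IsClosedPathLogVol.neg (hd : d ≠ 0) {i : Fin n} {a : ℝ} (h : σ.IsClosedPathLogVol i a) :
    a < 0 := by
  obtain ⟨m, hm, p, -, -, e, rfl⟩ := h
  have : Nonempty (Fin m) := ⟨⟨0, hm⟩⟩
  exact Finset.sum_neg (fun t _ => Real.log_neg (beta_pow_pos _ _ _) (beta_pow_lt_one hd _ _ _))
    Finset.univ_nonempty

lemma Irreducible.hasDenseLengths (hirr : σ.Irreducible) (hinc : σ.Incommensurable) :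
    (σ.graph hd).HasDenseLengths := by
  obtain ⟨i, j, a, b, ha, hb, hab⟩ := hinc
  refine StochasticMultigraph.hasDenseLengths_of_irrational (hirr.exists_hasPath hd)
    (ha.hasPath hd) (hb.hasPath hd) ?_
  rintro ⟨q, hq⟩
  rw [neg_div_neg_eq, eq_div_iff (hb.neg hd).ne] at hq
  exact hab q hq.symm

end Graph

/-! ### The matrix `Q` -/

section Qmat

variable {d n : ℕ} {σ : MSScheme d n}

lemma Mmat_mem_rowStochastic (σ : MSScheme d n) (hd : d ≠ 0) :
    Mmat σ ∈ Matrix.rowStochastic ℝ (Fin n) :=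
  Matrix.mem_rowStochastic_iff_sum.2
    ⟨fun i j => Finset.sum_nonneg (s := Finset.univ) fun k _ => (beta_pow_pos i j k).le,
      σ.sum_beta_pow hd⟩

lemma Mmat_pos {i j : Fin n} (h : 0 < σ.numSub i j) : 0 < Mmat σ i j :=
  Finset.sum_pos (s := Finset.univ) (fun k _ => beta_pow_pos i j k) ⟨⟨0, h⟩, Finset.mem_univ _⟩

lemma Irreducible.isIrreducible_Mmat (hirr : σ.Irreducible) (hd : d ≠ 0) :
    (Mmat σ).IsIrreducible where
  nonneg := (Matrix.mem_rowStochastic_iff_sum.1 (σ.Mmat_mem_rowStochastic hd)).1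
  connected i j := by
    let := (Mmat σ).toQuiver
    have hedge : ∀ {a b}, 0 < σ.numSub a b → Nonempty (a ⟶ b) := fun h => ⟨⟨Mmat_pos h⟩⟩
    induction hirr i j with
    | single h =>
      obtain ⟨e⟩ := hedge h
      exact ⟨e.toPath, by simp⟩
    | tail _ h ih =>
      obtain ⟨p, -⟩ := ih
      obtain ⟨e⟩ := hedge h
      exact ⟨p.cons e, by simp⟩

lemma M'mat_apply_eq (hd : d ≠ 0) (i j : Fin n) : M'mat σ i j =
    -(∑ k : (σ.graph hd).E i j, (σ.graph hd).weight k * (σ.graph hd).len k) / d := by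
  have hd' : (d : ℝ) ≠ 0 := Nat.cast_ne_zero.2 hd
  rw [eq_div_iff hd', ← Finset.sum_neg_distrib, M'mat, Matrix.of_apply, Finset.sum_mul]
  refine Finset.sum_congr rfl fun k _ => ?_
  simp only [StochasticMultigraph.len, graph, Real.log_pow]
  ring

/-- As the rows of the adjugate are equal, every row `q` gives
`tr (adj (1 - M) * M') = ∑ a b, q b * M' b a`. -/
lemma Irreducible.neg_trace_eq (hirr : σ.Irreducible) (hd : d ≠ 0) (i : Fin n) :
    -Matrix.trace ((1 - Mmat σ).adjugate * M'mat σ) =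
      (σ.graph hd).meanLen ((1 - Mmat σ).adjugate i) / d := by
  have hrows : ∀ a b, (1 - Mmat σ).adjugate a b = (1 - Mmat σ).adjugate i b :=
    fun a b => adjugate_one_sub_rows_eq (σ.Mmat_mem_rowStochastic hd)
      (hirr.isIrreducible_Mmat hd) a i b
  simp only [Matrix.trace, Matrix.diag_apply, Matrix.mul_apply, hrows, M'mat_apply_eq hd,
    StochasticMultigraph.meanLen, Finset.mul_sum, Finset.sum_div]
  rw [Finset.sum_comm, ← Finset.sum_neg_distrib]
  refine Finset.sum_congr rfl fun b _ => ?_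
  simp only [← Finset.mul_sum, ← Finset.sum_div, Finset.sum_neg_distrib]
  ring

lemma Irreducible.Qmat_pos (hirr : σ.Irreducible) (hd : d ≠ 0) (a b : Fin n) :
    0 < Qmat σ a b := by
  have : Nonempty (Fin n) := ⟨a⟩
  have hadj := adjugate_one_sub_pos (σ.Mmat_mem_rowStochastic hd) (hirr.isIrreducible_Mmat hd)
  have hnorm := div_pos ((σ.graph hd).meanLen_pos (hadj a))
    (Nat.cast_pos.2 (Nat.pos_of_ne_zero hd))
  rw [← hirr.neg_trace_eq hd a] at hnorm
  exact mul_pos (inv_pos.2 hnorm) (hadj a b)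

lemma Irreducible.Qmat_rows_eq (hirr : σ.Irreducible) (hd : d ≠ 0) (a b c : Fin n) :
    Qmat σ a c = Qmat σ b c := by
  rw [Qmat, Matrix.smul_apply, Matrix.smul_apply, adjugate_one_sub_rows_eq
    (σ.Mmat_mem_rowStochastic hd) (hirr.isIrreducible_Mmat hd) a b c]

lemma Qmat_vecMul_transition (hd : d ≠ 0) (i : Fin n) :
    Matrix.vecMul (Qmat σ i) (σ.graph hd).transition = Qmat σ i := by
  have : Nonempty (Fin n) := ⟨i⟩
  have hmul : Qmat σ * Mmat σ = Qmat σ := by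
    rw [Qmat, Matrix.smul_mul, adjugate_one_sub_mul (σ.Mmat_mem_rowStochastic hd)]
  exact congrFun hmul i

end Qmat

end MSScheme

/-! ### Kakutani sequences -/

section Kakutani

variable {d n : ℕ} {P : Finset (LTile d n)} {S : LTile d n}

/-- The largest volume of a tile in a finite collection (`0` for the empty collection). -/
def maxVol (P : Finset (LTile d n)) : ℝ := ⨆ S : P, S.1.vol

lemma vol_le_maxVol (hS : S ∈ P) : S.vol ≤ maxVol P :=
  le_ciSup (f := fun S : P => S.1.vol) (Set.finite_range _).bddAbove ⟨S, hS⟩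

lemma exists_vol_eq_maxVol (hP : P.Nonempty) : ∃ S ∈ P, S.vol = maxVol P := by
  have := hP.to_subtype
  obtain ⟨S, hS⟩ := exists_eq_ciSup_of_finite (f := fun S : P => S.1.vol)
  exact ⟨S, S.2, hS⟩

lemma card_eq_sum_countType (P : Finset (LTile d n)) : P.card = ∑ r, countType P r :=
  Finset.card_eq_sum_card_fiberwise fun _ _ => Finset.mem_coe.2 (Finset.mem_univ _)

lemma maxTiles_subset (P : Finset (LTile d n)) : maxTiles P ⊆ P := Finset.filter_subset _ _

variable {U : Set (Euc d)}

lemma IsPartition.mem_maxTiles (hP : IsPartition U P) :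
    S ∈ maxTiles P ↔ S ∈ P ∧ S.vol = maxVol P := by
  have hvol : ∀ {S S'}, S ∈ P → S' ∈ P →
      (volume S'.carrier ≤ volume S.carrier ↔ S'.vol ≤ S.vol) := fun {S S'} hS hS' =>
    (ENNReal.toReal_le_toReal (hP.isTile S' hS').1.measure_lt_top.ne
      (hP.isTile S hS).1.measure_lt_top.ne).symm
  rw [maxTiles, Finset.mem_filter]
  refine and_congr_right fun hS => ⟨fun h => ?_, fun h S' hS' => ?_⟩
  · obtain ⟨S', hS', hmax⟩ := exists_vol_eq_maxVol ⟨S, hS⟩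
    exact (vol_le_maxVol hS).antisymm (hmax ▸ (hvol hS hS').1 (h S' hS'))
  · exact (hvol hS hS').2 (h ▸ vol_le_maxVol hS')

lemma IsPartition.maxTiles_nonempty (hP : IsPartition U P) (hU : U.Nonempty) :
    (maxTiles P).Nonempty := by
  obtain ⟨S, hS⟩ := exists_vol_eq_maxVol (hP.nonempty hU)
  exact ⟨S, hP.mem_maxTiles.2 hS⟩

lemma IsPartition.maxVol_pos (hP : IsPartition U P) (hU : U.Nonempty) : 0 < maxVol P := by
  obtain ⟨S, hS, hmax⟩ := exists_vol_eq_maxVol (hP.nonempty hU)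
  exact hmax ▸ hP.vol_pos hS

variable {σ : MSScheme d n}

/-- The sum over the tree grown from a tile splits at the first substitution, because an edge of
length `l` stands for dividing the volume by `exp l`. -/
lemma SubstitutesTo.treeSum_eq (hd : d ≠ 0) (h : SubstitutesTo σ S P) {M : Type*}
    [AddCommMonoid M] (a b : Fin n → M) {θ : ℝ} (hθ : 0 < θ) (hS : θ < S.vol) :
    (σ.graph hd).treeSum a b S.type (Real.log (S.vol / θ)) =
      a S.type + ∑ Z ∈ P, (σ.graph hd).treeSum a b Z.type (Real.log (Z.vol / θ)) := by
  have hlog : ∀ j, ∀ e : (σ.graph hd).E S.type j, Real.log (S.vol / θ) - (σ.graph hd).len e =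
      Real.log ((σ.graph hd).weight e * S.vol / θ) := fun j e => by
    rw [mul_div_assoc, Real.log_mul ((σ.graph hd).weight_pos e).ne'
      (div_pos (hθ.trans hS) hθ).ne', add_comm, StochasticMultigraph.len, sub_neg_eq_add]
  rw [StochasticMultigraph.treeSum_of_pos _ _ _ _ (Real.log_pos ((one_lt_div hθ).2 hS)),
    h.sum_eq hd fun j v => (σ.graph hd).treeSum a b j (Real.log (v / θ))]
  simp only [hlog]
  rfl

/-- A step of a Kakutani sequence: `R` substitutes the tiles of maximal volume in `P` and keeps
the other tiles of `P`. -/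
structure IsKakutaniStep (σ : MSScheme d n) (P : Finset (LTile d n))
    (R : LTile d n → Finset (LTile d n)) : Prop where
  substitutesTo : ∀ S ∈ maxTiles P, SubstitutesTo σ S (R S)
  eq_singleton : ∀ S ∈ P, S ∉ maxTiles P → R S = {S}

namespace IsKakutaniStep

variable {R : LTile d n → Finset (LTile d n)}

lemma isPartition (hR : IsKakutaniStep σ P R) (hP : IsPartition U P) (hS : S ∈ P) :
    IsPartition S.carrier (R S) := by
  by_cases hmax : S ∈ maxTiles P
  · exact (hR.substitutesTo S hmax).isPartition
  · rw [hR.eq_singleton S hS hmax]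
    exact .singleton (hP.isTile S hS)

lemma maxVol_biUnion_lt (hd : d ≠ 0) (hR : IsKakutaniStep σ P R) (hP : IsPartition U P)
    (hU : U.Nonempty) : maxVol (P.biUnion R) < maxVol P := by
  have hne := (hP.biUnion fun S hS => hR.isPartition hP hS).nonempty hU
  obtain ⟨Z, hZ, hmax⟩ := exists_vol_eq_maxVol hne
  obtain ⟨S, hS, hZ⟩ := Finset.mem_biUnion.1 hZ
  rw [← hmax]
  by_cases hS' : S ∈ maxTiles P
  · exact ((hR.substitutesTo S hS').vol_lt hd hZ (hP.vol_pos hS)).trans_le (vol_le_maxVol hS)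
  · rw [hR.eq_singleton S hS hS', Finset.mem_singleton] at hZ
    exact hZ ▸ (vol_le_maxVol hS).lt_of_ne fun h => hS' (hP.mem_maxTiles.2 ⟨hS, h⟩)

lemma sum_treeSum (hd : d ≠ 0) (hR : IsKakutaniStep σ P R) (hP : IsPartition U P) {M : Type*}
    [AddCommMonoid M] (a b : Fin n → M) {θ : ℝ} (hθ : 0 < θ) (hlt : θ < maxVol P) :
    ∑ S ∈ P, (σ.graph hd).treeSum a b S.type (Real.log (S.vol / θ)) =
      ∑ S ∈ maxTiles P, a S.type +
        ∑ Z ∈ P.biUnion R, (σ.graph hd).treeSum a b Z.type (Real.log (Z.vol / θ)) := by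
  have hsplit : ∀ S ∈ P, (σ.graph hd).treeSum a b S.type (Real.log (S.vol / θ)) =
      (if S ∈ maxTiles P then a S.type else 0) +
        ∑ Z ∈ R S, (σ.graph hd).treeSum a b Z.type (Real.log (Z.vol / θ)) := by
    intro S hS
    split_ifs with hmax
    · exact (hR.substitutesTo S hmax).treeSum_eq hd a b hθ ((hP.mem_maxTiles.1 hmax).2 ▸ hlt)
    · rw [hR.eq_singleton S hS hmax, Finset.sum_singleton, zero_add]
  rw [Finset.sum_congr rfl hsplit, Finset.sum_add_distrib, Finset.sum_ite_mem,
    Finset.inter_eq_right.2 (maxTiles_subset P),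
    Finset.sum_biUnion (hP.pairwiseDisjoint fun S hS => hR.isPartition hP hS)]

end IsKakutaniStep

namespace IsKakutaniSeq

variable {i : Fin n} {π : ℕ → Finset (LTile d n)}

lemma exists_isKakutaniStep (hπ : IsKakutaniSeq σ i π) (m : ℕ) :
    ∃ R, IsKakutaniStep σ (π m) R ∧ π (m + 1) = (π m).biUnion R := by
  obtain ⟨repl, hrepl, hsucc⟩ := hπ.2 m
  set R : LTile d n → Finset (LTile d n) := fun S => if S ∈ maxTiles (π m) then repl S else {S}
  have hmax : ∀ S ∈ maxTiles (π m), R S = repl S := fun S hS => if_pos hS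
  have hkeep : ∀ S ∉ maxTiles (π m), R S = {S} := fun S hS => if_neg hS
  refine ⟨R, ⟨fun S hS => hmax S hS ▸ hrepl S hS, fun S _ => hkeep S⟩, ?_⟩
  rw [hsucc, ← Finset.sdiff_union_of_subset (maxTiles_subset (π m)), Finset.union_biUnion,
    Finset.biUnion_congr rfl hmax,
    Finset.biUnion_congr rfl fun S hS => hkeep S (Finset.mem_sdiff.1 hS).2,
    Finset.biUnion_singleton_eq_self, Finset.sdiff_union_of_subset (maxTiles_subset (π m))]

lemma isPartition (hπ : IsKakutaniSeq σ i π) (m : ℕ) : IsPartition (σ.T i) (π m) := by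
  induction m with
  | zero => exact hπ.1 ▸ .singleton (S := ⟨σ.T i, i⟩) (σ.tile i)
  | succ m ih =>
    obtain ⟨R, hR, hsucc⟩ := hπ.exists_isKakutaniStep m
    exact hsucc ▸ ih.biUnion fun S hS => hR.isPartition ih hS

lemma maxVol_pos (hπ : IsKakutaniSeq σ i π) (m : ℕ) : 0 < maxVol (π m) :=
  (hπ.isPartition m).maxVol_pos (σ.tile i).nonempty

lemma strictAnti_maxVol (hd : d ≠ 0) (hπ : IsKakutaniSeq σ i π) :
    StrictAnti fun m => maxVol (π m) := by
  refine strictAnti_nat_of_succ_lt fun m => ?_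
  obtain ⟨R, hR, hsucc⟩ := hπ.exists_isKakutaniStep m
  exact hsucc ▸ hR.maxVol_biUnion_lt hd (hπ.isPartition m) (σ.tile i).nonempty

lemma sum_treeSum (hd : d ≠ 0) (hπ : IsKakutaniSeq σ i π) {M : Type*} [AddCommMonoid M]
    (a b : Fin n → M) {θ : ℝ} (hθ : 0 < θ) {m : ℕ} (hlt : θ < maxVol (π m)) :
    ∑ S ∈ π m, (σ.graph hd).treeSum a b S.type (Real.log (S.vol / θ)) =
      ∑ S ∈ maxTiles (π m), a S.type +
        ∑ S ∈ π (m + 1), (σ.graph hd).treeSum a b S.type (Real.log (S.vol / θ)) := by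
  obtain ⟨R, hR, hsucc⟩ := hπ.exists_isKakutaniStep m
  exact hsucc ▸ hR.sum_treeSum hd (hπ.isPartition m) a b hθ hlt

/-- Otherwise the total number of inner nodes of the trees grown from the tiles of `π m` down to
volume `θ` would decrease forever. -/
lemma exists_maxVol_le (hd : d ≠ 0) (hπ : IsKakutaniSeq σ i π) {θ : ℝ} (hθ : 0 < θ) :
    ∃ m, maxVol (π m) ≤ θ := by
  by_contra! hlt
  refine not_strictAnti_of_wellFoundedLT
    (fun m => ∑ S ∈ π m, (σ.graph hd).treeSum (1 : Fin n → ℕ) 0 S.type (Real.log (S.vol / θ)))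
    (strictAnti_nat_of_succ_lt fun m => ?_)
  rw [hπ.sum_treeSum hd 1 0 hθ (hlt m)]
  refine lt_add_of_pos_left _ (Finset.sum_pos (fun _ _ => one_pos) ?_)
  exact (hπ.isPartition m).maxTiles_nonempty (σ.tile i).nonempty

lemma tendsto_log_div_maxVol (hd : d ≠ 0) (hπ : IsKakutaniSeq σ i π) :
    Tendsto (fun m => Real.log ((volume (σ.T i)).toReal / maxVol (π m))) atTop atTop := by
  have hV := (σ.tile i).toReal_volume_pos
  refine tendsto_atTop.2 fun b => ?_
  obtain ⟨m₀, hm₀⟩ := hπ.exists_maxVol_le hd (div_pos hV (Real.exp_pos b))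
  filter_upwards [eventually_ge_atTop m₀] with m hm
  rw [Real.le_log_iff_exp_le (div_pos hV (hπ.maxVol_pos m)), le_div_comm₀ (Real.exp_pos b)
    (hπ.maxVol_pos m)]
  exact ((hπ.strictAnti_maxVol hd).antitone hm).trans hm₀

lemma countType_eq_leafCount (hd : d ≠ 0) (hπ : IsKakutaniSeq σ i π) (r : Fin n) (m : ℕ) :
    (countType (π m) r : ℝ) = (σ.graph hd).leafCount r i
      (Real.log ((volume (σ.T i)).toReal / maxVol (π m))) := by
  have hθ := hπ.maxVol_pos m
  have hconst : ∀ k ≤ m, ∑ S ∈ π k, (σ.graph hd).leafCount r S.type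
      (Real.log (S.vol / maxVol (π m))) =
        (σ.graph hd).leafCount r i (Real.log ((volume (σ.T i)).toReal / maxVol (π m))) := by
    intro k hk
    induction k with
    | zero => rw [hπ.1, Finset.sum_singleton, LTile.vol]
    | succ k ih =>
      rw [← ih (by omega)]
      simp only [StochasticMultigraph.leafCount,
        hπ.sum_treeSum hd _ _ hθ (hπ.strictAnti_maxVol hd (Nat.lt_of_succ_le hk)),
        Pi.zero_apply, Finset.sum_const_zero, zero_add]
  have hleaf : ∀ S ∈ π m, (σ.graph hd).leafCount r S.type (Real.log (S.vol / maxVol (π m))) =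
      if S.type = r then 1 else 0 := fun S hS => by
    have hlog : Real.log (S.vol / maxVol (π m)) ≤ 0 :=
      Real.log_nonpos (div_nonneg ((hπ.isPartition m).vol_pos hS).le hθ.le)
        (div_le_one_of_le₀ (vol_le_maxVol hS) hθ.le)
    rw [StochasticMultigraph.leafCount, StochasticMultigraph.treeSum_of_nonpos _ _ _ _ hlog,
      Pi.single_apply]
  rw [← hconst m le_rfl, Finset.sum_congr rfl hleaf, Finset.sum_boole, countType]

end IsKakutaniSeq

end Kakutani

end

/-- **Theorem 1.11 (2).** For an irreducible incommensurable multiscale substitution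
scheme, the matrix `Q_σ` has positive entries and equal rows, and in any Kakutani
sequence of partitions of `T i`, the frequency of tiles of type `r` converges to
`(Σ_h q_h Σ_k (1 − (β_hr^(k))^d)) / (Σ_{h,j} q_h Σ_k (1 − (β_hj^(k))^d))`. -/
theorem type_frequency_kakutani {d n : ℕ} (σ : MSScheme d n)
    (hirr : σ.Irreducible) (hinc : σ.Incommensurable) (i : Fin n)
    (π : ℕ → Finset (LTile d n)) (hπ : IsKakutaniSeq σ i π) (r : Fin n) :
    (∀ a b : Fin n, 0 < Qmat σ a b) ∧
    (∀ a b c : Fin n, Qmat σ a c = Qmat σ b c) ∧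
    Tendsto (fun m => (countType (π m) r : ℝ) / ((π m).card : ℝ)) atTop
      (𝓝 ((∑ h : Fin n, Qmat σ i h * ∑ k : Fin (σ.numSub h r), (1 - σ.beta h r k ^ d)) /
          (∑ h : Fin n, ∑ j : Fin n,
            Qmat σ i h * ∑ k : Fin (σ.numSub h j), (1 - σ.beta h j k ^ d)))) := by
  have hd := hinc.dim_ne_zero
  have : Nonempty (Fin n) := ⟨i⟩
  refine ⟨hirr.Qmat_pos hd, hirr.Qmat_rows_eq hd, ?_⟩
  have hlim := StochasticMultigraph.tendsto_leafCount_div_sum (hirr.hasDenseLengths hd hinc)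
    (MSScheme.Qmat_vecMul_transition hd i) (hirr.Qmat_pos hd i) r i
  refine (hlim.comp (hπ.tendsto_log_div_maxVol hd)).congr fun m => ?_
  rw [card_eq_sum_countType, Nat.cast_sum]
  simp only [hπ.countType_eq_leafCount hd, Function.comp_apply]
end
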